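/- arXiv:0707.0546 — 11 statements merged into one kernel-verified Lean document; each statement's English description precedes it below -/
import Mathlib

section
/- Let M be a popular matching (with strict preference lists). Then every f_i-job p is matched in M to an applicant x ∈ C_i such that f(x) = p. -/
/-!
The proof is by strong induction on the category `i`, using only two kinds of deviation from the
popular matching `M`: promoting one applicant `x` to a job `p`, evicting the holder of `p`
(`Popular.exists_holder`), and a chain of two promotions, where the evicted holder `y` of `p` is in
turn promoted to a job `q` (`Popular.exists_holder_chain`). Popularity says that each deviation has
a loser, at least as heavy as all the winners together.

Let `p = f x` with `x` in category `i`, and let the claim hold for lower categories. Any applicant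
`a` of category at most `i` that does not hold `f a` strictly prefers `f a` to what it holds: a job
better than `f a` is an `f_j`-job with `j < cat a`, so by induction it is held by someone of
category `j`. Hence if `x` does not hold `p`, promoting `x` shows that `p` is held by some `y` with
`cat y ≤ i`. If `y` is not as desired, then `f y ≠ p`, and the chain `x → p`, `y → f y` shows that
`f y` is held by some `z` with `w x + w y ≤ w z`, so `cat z < cat y`. By induction this is
impossible if `cat y < i`. So `cat y = i`, and now `f y` is an `f_i`-job held by `z` with
`cat z < i`; thus `f z ≠ f y`, and the chain `y → f y`, `z → f z` produces a holder of `f z` heavier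
than `z`, contradicting the induction hypothesis for the job `f z`.
-/


/-- `p` is an `f_i`-job: `p = f x` for some applicant `x` in category `i`. -/
def FJob {A J : Type*} (cat : A → ℕ) (f : A → J) (i : ℕ) (p : J) : Prop :=
  ∃ x, cat x = i ∧ f x = p

/-- The rank of the job (if any) that applicant `x` receives in matching `M`;
`⊤` means `x` is unmatched (worse than any job on the list). -/
def mrank {A J : Type*} (r : A → J → ℕ∞) (M : A → Option J) (x : A) : ℕ∞ :=
  (M x).elim ⊤ (r x)

/-- `M` is a matching of the instance: every applicant is assigned at most one job,
along an edge of `H` (i.e. a job on its list, `r x p < ⊤`), and every job is assigned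
to at most one applicant. -/
def IsMatching {A J : Type*} (r : A → J → ℕ∞) (M : A → Option J) : Prop :=
  (∀ x p, M x = some p → r x p < ⊤) ∧ ∀ x y p, M x = some p → M y = some p → x = y

open Classical in
/-- Satisfaction of `M₁` with respect to `M₂`: total weight of applicants who prefer
`M₁` to `M₂` minus the total weight of those who prefer `M₂` to `M₁`. -/
noncomputable def satisfaction {A J : Type*} [Fintype A]
    (r : A → J → ℕ∞) (w : A → ℚ) (M₁ M₂ : A → Option J) : ℚ :=
  (∑ x, if mrank r M₁ x < mrank r M₂ x then w x else 0)
    - ∑ x, if mrank r M₂ x < mrank r M₁ x then w x else 0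

/-- `M₁` is more popular than `M₂`. -/
def MorePopular {A J : Type*} [Fintype A]
    (r : A → J → ℕ∞) (w : A → ℚ) (M₁ M₂ : A → Option J) : Prop :=
  0 < satisfaction r w M₁ M₂

/-- A matching is popular if no matching is more popular than it. -/
def Popular {A J : Type*} [Fintype A]
    (r : A → J → ℕ∞) (w : A → ℚ) (M : A → Option J) : Prop :=
  IsMatching r M ∧ ∀ M', IsMatching r M' → ¬ MorePopular r w M' M

open Classical in
/-- The assignment obtained from `M` by giving job `p` to applicant `x` and leaving the previous
holder of `p`, if it is someone else, unmatched. -/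
noncomputable def reassign {A J : Type*} (M : A → Option J) (x : A) (p : J) : A → Option J :=
  fun a => if a = x then some p else if M a = some p then none else M a

theorem IsMatching.reassign {A J : Type*} {r : A → J → ℕ∞} {M : A → Option J}
    (hM : IsMatching r M) {x : A} {p : J} (hxp : r x p < ⊤) :
    IsMatching r (reassign M x p) := by
  obtain ⟨h1, h2⟩ := hM
  constructor
  · intro a q h
    unfold _root_.reassign at h
    grind
  · intro a b q ha hb
    unfold _root_.reassign at ha hb
    grind

/-- If the applicants in the nonempty set `S` prefer the matching `N` to the popular matching `M`,
and only a holder of `q` in `M` can lose by moving to `N`, then there is such a loser, and it weighs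
at least as much as `S`. -/
theorem Popular.exists_loser {A J : Type*} [Fintype A] {r : A → J → ℕ∞} {w : A → ℚ}
    {M N : A → Option J} (hM : Popular r w M) (hN : IsMatching r N) (hw : ∀ a, 0 < w a)
    (S : Finset A) (hne : S.Nonempty) (hS : ∀ a ∈ S, mrank r N a < mrank r M a) (q : J)
    (hq : ∀ a, mrank r M a < mrank r N a → M a = some q) :
    ∃ z, M z = some q ∧ mrank r M z < mrank r N z ∧ ∑ a ∈ S, w a ≤ w z := by
  classical
  have h := hM.2 N hN
  unfold MorePopular satisfaction at h
  rw [← Finset.sum_filter, ← Finset.sum_filter] at h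
  have hpos : 0 < ∑ a ∈ S, w a := Finset.sum_pos (fun a _ => hw a) hne
  have hle : ∑ a ∈ S, w a ≤ ∑ a with mrank r N a < mrank r M a, w a :=
    Finset.sum_le_sum_of_subset_of_nonneg (fun a ha => by simpa using hS a ha)
      (fun a _ _ => (hw a).le)
  by_cases hz : ∃ z, mrank r M z < mrank r N z
  · obtain ⟨z, hz⟩ := hz
    refine ⟨z, hq z hz, hz, ?_⟩
    have : (Finset.univ.filter fun a => mrank r M a < mrank r N a) = {z} := by
      ext a
      simp only [Finset.mem_filter, Finset.mem_univ, true_and, Finset.mem_singleton]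
      exact ⟨fun ha => hM.1.2 a z q (hq a ha) (hq z hz), fun ha => ha ▸ hz⟩
    rw [this, Finset.sum_singleton] at h
    linarith
  · have : (Finset.univ.filter fun a => mrank r M a < mrank r N a) = ∅ := by
      ext a
      simpa using not_lt.1 fun ha => hz ⟨a, ha⟩
    rw [this, Finset.sum_empty] at h
    linarith

/-- In a popular matching, a job that `x` prefers to its own is held by someone at least as heavy
as `x`. -/
theorem Popular.exists_holder {A J : Type*} [Fintype A] {r : A → J → ℕ∞} {w : A → ℚ}
    {M : A → Option J} (hM : Popular r w M) (hw : ∀ a, 0 < w a) {x : A} {p : J}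
    (hx : r x p < mrank r M x) :
    ∃ y, M y = some p ∧ w x ≤ w y := by
  have hxN : mrank r (reassign M x p) x = r x p := by simp [mrank, reassign]
  obtain ⟨y, hy, -, hle⟩ := hM.exists_loser (hM.1.reassign (lt_of_lt_of_le hx le_top)) hw {x}
    (Finset.singleton_nonempty x) (by simpa [hxN] using hx) p (by
      intro a ha
      by_contra hap
      rcases eq_or_ne a x with rfl | hax
      · rw [hxN] at ha
        exact lt_asymm ha hx
      · simp [mrank, reassign, hax, hap] at ha)
  exact ⟨y, hy, by simpa using hle⟩

/-- In a popular matching, if `x` prefers the job `p` of `y ≠ x` to its own, and `y` prefers `q`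
to `p`, then `q` is held by someone at least as heavy as `x` and `y` together. -/
theorem Popular.exists_holder_chain {A J : Type*} [Fintype A] {r : A → J → ℕ∞} {w : A → ℚ}
    {M : A → Option J} (hM : Popular r w M) (hw : ∀ a, 0 < w a) {x y : A} {p q : J}
    (hxy : x ≠ y) (hyp : M y = some p) (hx : r x p < mrank r M x) (hy : r y q < mrank r M y) :
    ∃ z, M z = some q ∧ w x + w y ≤ w z := by
  classical
  have hpq : p ≠ q := by
    rintro rfl
    simp [mrank, hyp] at hy
  have hxN : mrank r (reassign (reassign M x p) y q) x = r x p := by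
    simp [mrank, reassign, hxy, hpq]
  have hyN : mrank r (reassign (reassign M x p) y q) y = r y q := by simp [mrank, reassign]
  obtain ⟨z, hz, -, hle⟩ := hM.exists_loser
    ((hM.1.reassign (lt_of_lt_of_le hx le_top)).reassign (lt_of_lt_of_le hy le_top)) hw {x, y}
    (Finset.insert_nonempty x {y}) (by
      intro a ha
      rcases Finset.mem_insert.1 ha with rfl | ha
      · rwa [hxN]
      · rw [Finset.mem_singleton.1 ha, hyN]
        exact hy) q (by
      intro a ha
      by_contra haq
      rcases eq_or_ne a x with rfl | hax
      · rw [hxN] at ha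
        exact lt_asymm ha hx
      rcases eq_or_ne a y with rfl | hay
      · rw [hyN] at ha
        exact lt_asymm ha hy
      have hap : M a ≠ some p := fun h => hay (hM.1.2 a y p h hyp)
      simp [mrank, reassign, hax, hay, hap, haq] at ha)
  exact ⟨z, hz, by simpa [Finset.sum_pair hxy] using hle⟩

/-- In a popular matching (strict lists), every `f_i`-job `p` is
matched to an applicant `x` of category `i` with `f x = p`. -/
theorem popular_fJob_matched
    {A J : Type*} [Fintype A] [Fintype J]
    (k : ℕ) (r : A → J → ℕ∞) (cat : A → ℕ) (wt : ℕ → ℚ)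
    (f : A → J) (l : A → J)
    (hcat : ∀ x, 1 ≤ cat x ∧ cat x ≤ k)
    (hw : ∀ i j, 1 ≤ i → i < j → j ≤ k → wt j < wt i)
    (hwpos : ∀ i, 1 ≤ i → i ≤ k → 0 < wt i)
    (hstrict : ∀ x p q, r x p < ⊤ → r x q < ⊤ → r x p = r x q → p = q)
    (hlast : ∀ x, r x (l x) < ⊤ ∧ (∀ p, r x p < ⊤ → p ≠ l x → r x p < r x (l x)) ∧
      ∀ y, r y (l x) < ⊤ → y = x)
    (hfirst : ∀ x, r x (f x) < ⊤ ∧ (∀ j, j < cat x → ¬ FJob cat f j (f x)) ∧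
      ∀ p, r x p < ⊤ → r x p < r x (f x) → ∃ j, j < cat x ∧ FJob cat f j p)
    (M : A → Option J) (hpop : Popular r (fun z => wt (cat z)) M)
    (i : ℕ) (p : J) (hp : FJob cat f i p) :
    ∃ x, cat x = i ∧ f x = p ∧ M x = some p := by
  have hwp : ∀ a, 0 < wt (cat a) := fun a => hwpos _ (hcat a).1 (hcat a).2
  have hcat_le : ∀ a b, wt (cat a) ≤ wt (cat b) → cat b ≤ cat a := fun a b h =>
    not_lt.1 fun hlt => absurd h (not_le.2 (hw _ _ (hcat a).1 hlt (hcat b).2))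
  induction i using Nat.strong_induction_on generalizing p with
  | _ i ih =>
  have hprefers : ∀ a, cat a ≤ i → M a ≠ some (f a) → r a (f a) < mrank r M a := by
    intro a hai hne
    cases hMa : M a with
    | none => simpa [mrank, hMa] using (hfirst a).1
    | some q =>
      have hq := hpop.1.1 a q hMa
      simp only [mrank, hMa, Option.elim_some]
      by_contra hle
      rcases (not_lt.1 hle).lt_or_eq with hlt | heq
      · obtain ⟨j, hj, hjq⟩ := (hfirst a).2.2 q hq hlt
        obtain ⟨b, hb, -, hMb⟩ := ih j (by omega) q hjq
        rw [hpop.1.2 a b q hMa hMb] at hj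
        omega
      · exact hne (by rw [hMa, hstrict a q (f a) hq (hfirst a).1 heq])
  -- A holder of `f a` with `cat a < i` has the same category as `a`, so it is no heavier.
  have hlow : ∀ a z, cat a < i → M z = some (f a) → cat z = cat a := by
    intro a z ha hz
    obtain ⟨b, hb, -, hMb⟩ := ih (cat a) ha (f a) ⟨a, rfl, rfl⟩
    rw [hpop.1.2 z b _ hz hMb, hb]
  obtain ⟨x, rfl, rfl⟩ := hp
  by_cases hMx : M x = some (f x)
  · exact ⟨x, rfl, rfl, hMx⟩
  have hx := hprefers x le_rfl hMx
  obtain ⟨y, hy, hwy⟩ := hpop.exists_holder hwp hx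
  have hyx : cat y ≤ cat x := hcat_le x y hwy
  have hxy : x ≠ y := fun h => hMx (h ▸ hy)
  by_cases hfy : f y = f x
  · rcases hyx.lt_or_eq with hlt | heq
    · exact absurd ⟨y, rfl, hfy⟩ ((hfirst x).2.1 _ hlt)
    · exact ⟨y, heq, hfy, hy⟩
  exfalso
  have hy' := hprefers y hyx (by simpa [hy] using Ne.symm hfy)
  obtain ⟨z, hz, hwz⟩ := hpop.exists_holder_chain hwp hxy hy hx hy'
  have hzy : cat z < cat y := by
    refine lt_of_le_of_ne (hcat_le y z (by linarith [hwp x])) fun h => ?_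
    simp only [h] at hwz
    linarith [hwp x]
  rcases hyx.lt_or_eq with hlt | heq
  · exact hzy.ne (hlow y z hlt hz)
  · -- `f y` is now an `f_i`-job held by `z` of lower category, so it differs from `f z`.
    have hfz : f y ≠ f z := fun h => (hfirst y).2.1 _ hzy ⟨z, rfl, h.symm⟩
    have hz' := hprefers z (by omega) (by simpa [hz] using hfz)
    obtain ⟨u, hu, hwu⟩ := hpop.exists_holder_chain hwp
      (fun h => hzy.ne (by rw [h])) hz hy' hz'
    simp only [hlow z u (by omega) hu] at hwu
    linarith [hwp y]
end

section
/- Let M be a popular matching (with strict preference lists). Then every applicant x is matched in M either to f(x) or to s(x). -/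
section

variable {A J : Type*} {r : A → J → ℕ∞} {M : A → Option J}

lemma mrank_of_eq_some {x : A} {p : J} (h : M x = some p) : mrank r M x = r x p := by
  simp [mrank, h]

lemma mrank_of_eq_none {x : A} (h : M x = none) : mrank r M x = ⊤ := by
  simp [mrank, h]

/-- With strict lists, an applicant not matched to an acceptable job `q` and not preferring `q`
to its own job holds a job that is strictly better than `q`. -/
lemma exists_better_of_not_prefers (hM : IsMatching r M)
    (hstrict : ∀ x p q, r x p < ⊤ → r x q < ⊤ → r x p = r x q → p = q)
    {x : A} {q : J} (hq : r x q < ⊤) (hne : M x ≠ some q) (hnot : ¬ r x q < mrank r M x) :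
    ∃ p, M x = some p ∧ r x p < ⊤ ∧ r x p < r x q := by
  rcases h : M x with _ | p
  · exact absurd (by rwa [mrank_of_eq_none h]) hnot
  · rw [mrank_of_eq_some h, not_lt] at hnot
    refine ⟨p, rfl, hM.1 x p h, lt_of_le_of_ne hnot fun heq => hne ?_⟩
    rw [h, hstrict x p q (hM.1 x p h) hq heq]

/-- Popularity as a weight bound: if passing to `M'` improves everyone in `P` and hurts
nobody outside `D`, then `D` weighs at least as much as `P`. -/
lemma Popular.sum_le_sum [Fintype A] {w : A → ℚ} (hpop : Popular r w M) (hw : ∀ x, 0 < w x)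
    {M' : A → Option J} (hM' : IsMatching r M') (P D : Finset A)
    (hP : ∀ x ∈ P, mrank r M' x < mrank r M x)
    (hD : ∀ x, mrank r M x < mrank r M' x → x ∈ D) :
    ∑ x ∈ P, w x ≤ ∑ x ∈ D, w x := by
  classical
  have h := hpop.2 M' hM'
  simp only [MorePopular, satisfaction, not_lt, sub_nonpos] at h
  rw [← Finset.sum_filter, ← Finset.sum_filter] at h
  refine le_trans (Finset.sum_le_sum_of_subset_of_nonneg ?_ fun x _ _ => (hw x).le)
    (h.trans (Finset.sum_le_sum_of_subset_of_nonneg ?_ fun x _ _ => (hw x).le))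
  · intro x hx
    simpa using hP x hx
  · intro x hx
    exact hD x (by simpa using hx)

/-- In a popular matching, a job that `x` would prefer to its own is held by an applicant weighing
at least as much as `x`: otherwise hand the job over to `x`. -/
lemma exists_holder_of_prefers [Fintype A] {w : A → ℚ} (hpop : Popular r w M)
    (hw : ∀ x, 0 < w x) {x : A} {q : J} (hx : r x q < mrank r M x) :
    ∃ y, M y = some q ∧ w x ≤ w y := by
  classical
  let M' : A → Option J := fun v => if v = x then some q else if M v = some q then none else M v
  have hxM' : mrank r M' x = r x q := mrank_of_eq_some (by simp [M'])
  have hM' : IsMatching r M' := by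
    constructor
    · intro v p hv
      have := hpop.1.1 v p
      have hlt : r x q < ⊤ := lt_of_lt_of_le hx le_top
      simp only [M'] at hv
      grind
    · intro v v' p hv hv'
      have := hpop.1.2 v v' p
      simp only [M'] at hv hv'
      grind
  have hworse : ∀ v, mrank r M v < mrank r M' v → M v = some q := by
    intro v hv
    by_cases hvx : v = x
    · subst hvx
      exact absurd (hv.trans (hxM'.trans_lt hx)) (lt_irrefl _)
    · by_contra hne
      simp [mrank, M', hvx, hne] at hv
  by_cases hheld : ∃ y, M y = some q
  · obtain ⟨y, hy⟩ := hheld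
    refine ⟨y, hy, ?_⟩
    simpa using hpop.sum_le_sum hw hM' {x} {y} (by simpa [hxM'] using hx)
      (fun v hv => by simpa using hpop.1.2 v y q (hworse v hv) hy)
  · have := hpop.sum_le_sum hw hM' {x} ∅ (by simpa [hxM'] using hx)
      (fun v hv => absurd ⟨v, hworse v hv⟩ hheld)
    simp at this
    exact absurd (hw x) (not_lt.mpr this)

/-- If `x` prefers the job `q` of `y`, and `y` prefers the job `g` of `z`, then in a popular
matching `z` outweighs `x` and `y` together: otherwise promote `x` and `y` and unmatch `z`.
The case `z = x` is allowed. -/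
lemma add_le_of_chain [Fintype A] {w : A → ℚ} (hpop : Popular r w M)
    (hw : ∀ x, 0 < w x) {x y z : A} {q g : J} (hx : r x q < mrank r M x) (hyq : M y = some q)
    (hy : r y g < mrank r M y) (hz : M z = some g) :
    w x + w y ≤ w z := by
  classical
  have hxy : x ≠ y := by
    rintro rfl
    exact absurd hx (by simp [mrank_of_eq_some hyq])
  have hqg : q ≠ g := by
    rintro rfl
    exact absurd hy (by simp [mrank_of_eq_some hyq])
  let M' : A → Option J := fun v => if v = x then some q else if v = y then some g
    else if M v = some g then none else M v
  have hxM' : mrank r M' x = r x q := mrank_of_eq_some (by simp [M'])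
  have hyM' : mrank r M' y = r y g := mrank_of_eq_some (by simp [M', hxy.symm])
  have hM' : IsMatching r M' := by
    constructor
    · intro v p hv
      have := hpop.1.1 v p
      have hlt : r x q < ⊤ := lt_of_lt_of_le hx le_top
      have hlt' : r y g < ⊤ := lt_of_lt_of_le hy le_top
      simp only [M'] at hv
      grind
    · intro v v' p hv hv'
      have h₁ := hpop.1.2 v v' p
      have h₂ := hpop.1.2 v y q
      have h₃ := hpop.1.2 v' y q
      simp only [M'] at hv hv'
      grind
  have hworse : ∀ v, mrank r M v < mrank r M' v → M v = some g := by
    intro v hv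
    by_cases hvx : v = x
    · subst hvx
      exact absurd (hv.trans (hxM'.trans_lt hx)) (lt_irrefl _)
    · by_cases hvy : v = y
      · subst hvy
        exact absurd (hv.trans (hyM'.trans_lt hy)) (lt_irrefl _)
      · by_contra hne
        simp [mrank, M', hvx, hvy, hne] at hv
  have := hpop.sum_le_sum hw hM' {x, y} {z} (by simpa [hxM', hyM'] using ⟨hx, hy⟩)
    (fun v hv => by simpa using hpop.1.2 v z g (hworse v hv) hz)
  simpa [Finset.sum_pair hxy] using this

variable {cat : A → ℕ} {f : A → J}

/-- If, for every `j < cat x`, each `f_j`-job is held by an applicant in `C_j`, then `x` either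
holds `f x` or prefers it to its own job. -/
lemma prefers_f (hM : IsMatching r M)
    (hstrict : ∀ x p q, r x p < ⊤ → r x q < ⊤ → r x p = r x q → p = q)
    (hfirst : ∀ x, r x (f x) < ⊤ ∧ (∀ j, j < cat x → ¬ FJob cat f j (f x)) ∧
      ∀ p, r x p < ⊤ → r x p < r x (f x) → ∃ j, j < cat x ∧ FJob cat f j p)
    {x : A} (hheld : ∀ j < cat x, ∀ p, FJob cat f j p → ∃ y, M y = some p ∧ cat y = j ∧ f y = p)
    (hne : M x ≠ some (f x)) : r x (f x) < mrank r M x := by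
  by_contra hnot
  obtain ⟨p, hp, hpt, hlt⟩ := exists_better_of_not_prefers hM hstrict (hfirst x).1 hne hnot
  obtain ⟨j, hj, hjp⟩ := (hfirst x).2.2 p hpt hlt
  obtain ⟨y, hy, hyj, -⟩ := hheld j hj p hjp
  obtain rfl := hM.2 y x p hy hp
  omega

/-- If another applicant `x` prefers the job `q` of `y`, and `f y` is held by someone in the category
of `y`, then `q` is the first job of `y`. The hypothesis `hheld` on the lower `f_j`-jobs ensures
that `y` would otherwise prefer `f y` to `q`. -/
lemma f_eq_of_prefers [Fintype A] {wt : ℕ → ℚ} (hpop : Popular r (fun z => wt (cat z)) M)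
    (hw : ∀ x, 0 < wt (cat x))
    (hstrict : ∀ x p q, r x p < ⊤ → r x q < ⊤ → r x p = r x q → p = q)
    (hfirst : ∀ x, r x (f x) < ⊤ ∧ (∀ j, j < cat x → ¬ FJob cat f j (f x)) ∧
      ∀ p, r x p < ⊤ → r x p < r x (f x) → ∃ j, j < cat x ∧ FJob cat f j p)
    {x y : A} {q : J} (hx : r x q < mrank r M x) (hy : M y = some q)
    (hheld : ∀ j < cat y, ∀ p, FJob cat f j p → ∃ y, M y = some p ∧ cat y = j ∧ f y = p)
    (hz : ∃ z, M z = some (f y) ∧ cat z = cat y) : f y = q := by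
  by_contra hne
  obtain ⟨z, hz, hcz⟩ := hz
  have hyf := prefers_f hpop.1 hstrict hfirst hheld (by rw [hy]; simpa using Ne.symm hne)
  have h := add_le_of_chain hpop hw hx hy hyf hz
  simp only [hcz] at h
  linarith [hw x]

/-- In a popular matching every `f_i`-job is held by an applicant in `C_i` whose first job it is. -/
lemma fJob_held [Fintype A] {wt : ℕ → ℚ} (hpop : Popular r (fun z => wt (cat z)) M)
    (hw : ∀ x, 0 < wt (cat x)) (hanti : ∀ x y, cat x < cat y → wt (cat y) < wt (cat x))
    (hstrict : ∀ x p q, r x p < ⊤ → r x q < ⊤ → r x p = r x q → p = q)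
    (hfirst : ∀ x, r x (f x) < ⊤ ∧ (∀ j, j < cat x → ¬ FJob cat f j (f x)) ∧
      ∀ p, r x p < ⊤ → r x p < r x (f x) → ∃ j, j < cat x ∧ FJob cat f j p)
    (i : ℕ) : ∀ p, FJob cat f i p → ∃ y, M y = some p ∧ cat y = i ∧ f y = p := by
  induction i using Nat.strong_induction_on with
  | _ i ih =>
    -- A weaker form comes first: the holder is in `C_i`, but its own first job may be another one.
    have hweak : ∀ x, cat x = i → ∃ z, M z = some (f x) ∧ cat z = i := by
      intro x hxi
      by_cases hMx : M x = some (f x)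
      · exact ⟨x, hMx, hxi⟩
      have hx := prefers_f hpop.1 hstrict hfirst (fun j hj => ih j (hxi ▸ hj)) hMx
      obtain ⟨y, hy, hwy⟩ := exists_holder_of_prefers hpop hw hx
      have hle : cat y ≤ cat x := not_lt.mp fun h => absurd (hanti x y h) (not_lt.mpr hwy)
      rcases hle.lt_or_eq with hlt | heq
      · obtain ⟨z, hz, hcz, -⟩ := ih (cat y) (hxi ▸ hlt) (f y) ⟨y, rfl, rfl⟩
        have := f_eq_of_prefers hpop hw hstrict hfirst hx hy
          (fun j hj => ih j (by omega)) ⟨z, hz, hcz⟩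
        exact absurd ⟨y, rfl, this⟩ ((hfirst x).2.1 (cat y) hlt)
      · exact ⟨y, hy, heq.trans hxi⟩
    rintro p ⟨x, hxi, rfl⟩
    by_cases hMx : M x = some (f x)
    · exact ⟨x, hMx, hxi, rfl⟩
    have hx := prefers_f hpop.1 hstrict hfirst (fun j hj => ih j (hxi ▸ hj)) hMx
    obtain ⟨y, hy, hyi⟩ := hweak x hxi
    refine ⟨y, hy, hyi, f_eq_of_prefers hpop hw hstrict hfirst hx hy
      (fun j hj => ih j (hyi ▸ hj)) ?_⟩
    obtain ⟨z, hz, hzi⟩ := hweak y hyi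
    exact ⟨z, hz, hzi.trans hyi.symm⟩

end

/-- In a popular matching (strict lists), every applicant is matched
either to its first job or to its second job. -/
theorem popular_matched_first_or_second
    {A J : Type*} [Fintype A] [Fintype J]
    (k : ℕ) (r : A → J → ℕ∞) (cat : A → ℕ) (wt : ℕ → ℚ)
    (f : A → J) (s : A → J) (l : A → J)
    (hcat : ∀ x, 1 ≤ cat x ∧ cat x ≤ k)
    (hw : ∀ i j, 1 ≤ i → i < j → j ≤ k → wt j < wt i)
    (hwpos : ∀ i, 1 ≤ i → i ≤ k → 0 < wt i)
    (hstrict : ∀ x p q, r x p < ⊤ → r x q < ⊤ → r x p = r x q → p = q)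
    (hlast : ∀ x, r x (l x) < ⊤ ∧ (∀ p, r x p < ⊤ → p ≠ l x → r x p < r x (l x)) ∧
      ∀ y, r y (l x) < ⊤ → y = x)
    (hfirst : ∀ x, r x (f x) < ⊤ ∧ (∀ j, j < cat x → ¬ FJob cat f j (f x)) ∧
      ∀ p, r x p < ⊤ → r x p < r x (f x) → ∃ j, j < cat x ∧ FJob cat f j p)
    (hsecond : ∀ x, r x (s x) < ⊤ ∧ (∀ j, j ≤ cat x → ¬ FJob cat f j (s x)) ∧
      ∀ p, r x p < ⊤ → r x p < r x (s x) → ∃ j, j ≤ cat x ∧ FJob cat f j p)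
    (M : A → Option J) (hpop : Popular r (fun z => wt (cat z)) M) :
    ∀ x, M x = some (f x) ∨ M x = some (s x) := by
  intro x
  have hpos : ∀ x, 0 < wt (cat x) := fun x => hwpos _ (hcat x).1 (hcat x).2
  have hanti : ∀ x y, cat x < cat y → wt (cat y) < wt (cat x) :=
    fun x y h => hw _ _ (hcat x).1 h (hcat y).2
  have hheld := fJob_held hpop hpos hanti hstrict hfirst
  by_contra! hne
  have hx : r x (s x) < mrank r M x := by
    by_contra hnot
    obtain ⟨p, hp, hpt, hlt⟩ :=
      exists_better_of_not_prefers hpop.1 hstrict (hsecond x).1 hne.2 hnot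
    obtain ⟨j, -, hjp⟩ := (hsecond x).2.2 p hpt hlt
    obtain ⟨y, hy, -, hfy⟩ := hheld j p hjp
    obtain rfl := hpop.1.2 y x p hy hp
    exact hne.1 (hfy ▸ hp)
  obtain ⟨y, hy, hwy⟩ := exists_holder_of_prefers hpop hpos hx
  have hle : cat y ≤ cat x := not_lt.mp fun h => absurd (hanti x y h) (not_lt.mpr hwy)
  obtain ⟨z, hz, hcz, -⟩ := hheld (cat y) (f y) ⟨y, rfl, rfl⟩
  have hfy := f_eq_of_prefers hpop hpos hstrict hfirst hx hy (fun j _ => hheld j) ⟨z, hz, hcz⟩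
  exact (hsecond x).2.1 (cat y) hle ⟨y, rfl, hfy⟩
end

section
/- Let M be a popular matching (with strict preference lists) and let x be an applicant. Then x is not matched in M to any job that x prefers to f(x), nor to any job that x prefers less than f(x) but prefers to s(x). -/
/-- In comparing a popular matching `M` with a matching `N`, a set `G` of applicants preferring
`N` weighs at most as much as any set `L` containing all applicants preferring `M`. -/
lemma Popular.sum_le {A J : Type*} [Fintype A] {r : A → J → ℕ∞} {w : A → ℚ} {M : A → Option J}
    (hpop : Popular r w M) (hw : ∀ a, 0 < w a) {N : A → Option J} (hN : IsMatching r N)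
    (G L : Finset A) (hG : ∀ a ∈ G, mrank r N a < mrank r M a)
    (hL : ∀ a, mrank r M a < mrank r N a → a ∈ L) :
    ∑ a ∈ G, w a ≤ ∑ a ∈ L, w a := by
  classical
  have h := hpop.2 N hN
  unfold MorePopular satisfaction at h
  rw [not_lt, sub_nonpos, ← Finset.sum_filter, ← Finset.sum_filter] at h
  refine le_trans (Finset.sum_le_sum_of_subset_of_nonneg ?_ fun a _ _ => (hw a).le) (h.trans
    (Finset.sum_le_sum_of_subset_of_nonneg ?_ fun a _ _ => (hw a).le))
  · intro a ha
    simpa using hG a ha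
  · intro a ha
    exact hL a (by simpa using ha)

/-- If `x` would rather have `p`, then `p` is held by someone weighing at least as much as `x`. -/
lemma exists_holder_of_improves {A J : Type*} [Fintype A] {r : A → J → ℕ∞} {w : A → ℚ}
    {M : A → Option J} (hpop : Popular r w M) (hw : ∀ a, 0 < w a) {x : A} {p : J}
    (hx : r x p < mrank r M x) :
    ∃ z, M z = some p ∧ w x ≤ w z := by
  classical
  let N : A → Option J := fun a => if a = x then some p else if M a = some p then none else M a
  have hN : IsMatching r N := by
    obtain ⟨h1, h2⟩ := hpop.1
    have := lt_of_lt_of_le hx le_top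
    constructor <;> simp only [N] <;> grind
  have hG : ∀ a ∈ ({x} : Finset A), mrank r N a < mrank r M a := by
    intro a ha
    obtain rfl := Finset.mem_singleton.1 ha
    simpa [mrank, N] using hx
  -- Only the current holder of `p` can be worse off.
  have hL : ∀ a, mrank r M a < mrank r N a → M a = some p := by
    intro a ha
    by_contra hn
    rcases eq_or_ne a x with rfl | hax
    · exact lt_asymm ha (hG a (by simp))
    · simp [mrank, N, hax, hn] at ha
  by_cases hz : ∃ z, M z = some p
  · obtain ⟨z, hz⟩ := hz
    refine ⟨z, hz, ?_⟩
    simpa using hpop.sum_le hw hN {x} {z} hG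
      (fun a ha => by simpa using hpop.1.2 a z p (hL a ha) hz)
  · have := hpop.sum_le hw hN {x} ∅ hG (fun a ha => (hz ⟨a, hL a ha⟩).elim)
    exact absurd (hw x) (by simpa using this)

/-- If `x` would rather have `p`, and the holder `y` of `p` would rather have `q`, then `q` is held
by someone weighing at least as much as `x` and `y` together. -/
lemma exists_holder_of_chain {A J : Type*} [Fintype A] {r : A → J → ℕ∞} {w : A → ℚ}
    {M : A → Option J} (hpop : Popular r w M) (hw : ∀ a, 0 < w a) {x y : A} {p q : J}
    (hx : r x p < mrank r M x) (hyp : M y = some p) (hy : r y q < mrank r M y) :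
    ∃ z, M z = some q ∧ w x + w y ≤ w z := by
  classical
  have hyx : y ≠ x := by
    rintro rfl
    simp [mrank, hyp] at hx
  have hqp : q ≠ p := by
    rintro rfl
    simp [mrank, hyp] at hy
  let N : A → Option J := fun a =>
    if a = x then some p else if a = y then some q else if M a = some q then none else M a
  have hN : IsMatching r N := by
    obtain ⟨h1, h2⟩ := hpop.1
    have := lt_of_lt_of_le hx le_top
    have := lt_of_lt_of_le hy le_top
    constructor <;> simp only [N] <;> grind
  have hGx : mrank r N x < mrank r M x := by simpa [mrank, N] using hx
  have hGy : mrank r N y < mrank r M y := by simpa [mrank, N, hyx] using hy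
  have hG : ∀ a ∈ ({x, y} : Finset A), mrank r N a < mrank r M a := by
    intro a ha
    rcases Finset.mem_insert.1 ha with rfl | ha
    · exact hGx
    · obtain rfl := Finset.mem_singleton.1 ha
      exact hGy
  -- Only the current holder of `q` can be worse off.
  have hL : ∀ a, mrank r M a < mrank r N a → M a = some q := by
    intro a ha
    by_contra hn
    rcases eq_or_ne a x with rfl | hax
    · exact lt_asymm ha hGx
    rcases eq_or_ne a y with rfl | hay
    · exact lt_asymm ha hGy
    simp [mrank, N, hax, hay, hn] at ha
  have hsum : ∑ a ∈ ({x, y} : Finset A), w a = w x + w y := Finset.sum_pair hyx.symm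
  by_cases hz : ∃ z, M z = some q
  · obtain ⟨z, hz⟩ := hz
    refine ⟨z, hz, ?_⟩
    simpa [hsum] using hpop.sum_le hw hN {x, y} {z} hG
      (fun a ha => by simpa using hpop.1.2 a z q (hL a ha) hz)
  · have := hpop.sum_le hw hN {x, y} ∅ hG (fun a ha => (hz ⟨a, hL a ha⟩).elim)
    rw [hsum, Finset.sum_empty] at this
    linarith [hw x, hw y]

/-- In a popular matching, every `f_i`-job `p` is held by an applicant of category `i` whose
`f`-job is `p`. -/
lemma fjob_holder {A J : Type*} [Fintype A]
    (k : ℕ) (r : A → J → ℕ∞) (cat : A → ℕ) (wt : ℕ → ℚ) (f : A → J)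
    (hcat : ∀ x, 1 ≤ cat x ∧ cat x ≤ k)
    (hw : ∀ i j, 1 ≤ i → i < j → j ≤ k → wt j < wt i)
    (hwpos : ∀ i, 1 ≤ i → i ≤ k → 0 < wt i)
    (hstrict : ∀ x p q, r x p < ⊤ → r x q < ⊤ → r x p = r x q → p = q)
    (hfirst : ∀ x, r x (f x) < ⊤ ∧ (∀ j, j < cat x → ¬ FJob cat f j (f x)) ∧
      ∀ p, r x p < ⊤ → r x p < r x (f x) → ∃ j, j < cat x ∧ FJob cat f j p)
    (M : A → Option J) (hpop : Popular r (fun z => wt (cat z)) M) (i : ℕ) :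
    ∀ p, FJob cat f i p → ∃ y, M y = some p ∧ cat y = i ∧ f y = p := by
  have hpos : ∀ a, 0 < wt (cat a) := fun a => hwpos _ (hcat a).1 (hcat a).2
  induction i using Nat.strong_induction_on with
  | _ i ih =>
  have improves : ∀ x, cat x ≤ i → M x ≠ some (f x) → r x (f x) < mrank r M x := by
    intro x hxi hne
    rcases hMx : M x with _ | q
    · simpa [mrank, hMx] using (hfirst x).1
    · have hq := hpop.1.1 x q hMx
      rw [show mrank r M x = r x q by simp [mrank, hMx]]
      rcases lt_trichotomy (r x (f x)) (r x q) with h | h | h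
      · exact h
      · exact absurd (hstrict x _ _ (hfirst x).1 hq h ▸ hMx) hne
      · obtain ⟨j, hj, hF⟩ := (hfirst x).2.2 q hq h
        obtain ⟨y, hy, hyj, -⟩ := ih j (by omega) q hF
        obtain rfl := hpop.1.2 x y q hMx hy
        omega
  have sameCat : ∀ p, FJob cat f i p → ∃ y, M y = some p ∧ cat y = i := by
    rintro p ⟨x, hxi, rfl⟩
    by_cases hx : M x = some (f x)
    · exact ⟨x, hx, hxi⟩
    have hximp := improves x hxi.le hx
    obtain ⟨y, hy, hle⟩ := exists_holder_of_improves hpop hpos hximp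
    refine ⟨y, hy, ?_⟩
    rcases lt_trichotomy (cat y) i with h | h | h
    · exfalso
      have hne : f x ≠ f y := fun he =>
        (hfirst x).2.1 (cat y) (by omega) ⟨y, rfl, he.symm⟩
      have hyimp := improves y h.le (by rw [hy]; simpa using hne)
      obtain ⟨z, hz, hzle⟩ := exists_holder_of_chain hpop hpos hximp hy hyimp
      obtain ⟨u, hu, hucat, -⟩ := ih (cat y) h (f y) ⟨y, rfl, rfl⟩
      obtain rfl := hpop.1.2 z u _ hz hu
      simp only [hucat] at hzle
      linarith [hpos x]
    · exact h
    · have := hw (cat x) (cat y) (hcat x).1 (by omega) (hcat y).2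
      exact absurd hle (not_le.2 this)
  rintro p ⟨x, hxi, rfl⟩
  obtain ⟨y, hy, hyi⟩ := sameCat (f x) ⟨x, hxi, rfl⟩
  refine ⟨y, hy, hyi, ?_⟩
  by_contra hne
  have hx : M x ≠ some (f x) := fun h => hne (by rw [hpop.1.2 y x _ hy h])
  have hyimp := improves y hyi.le (by rw [hy]; simpa using Ne.symm hne)
  obtain ⟨z, hz, hzle⟩ :=
    exists_holder_of_chain hpop hpos (improves x hxi.le hx) hy hyimp
  obtain ⟨u, hu, hucat⟩ := sameCat (f y) ⟨y, hyi, rfl⟩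
  obtain rfl := hpop.1.2 z u _ hz hu
  simp only [hucat, hyi] at hzle
  linarith [hpos x]

/-- In a popular matching (strict lists), no applicant `x` is matched
to a job it prefers to `f x`, nor to a job in between `f x` and `s x` on its list. -/
theorem popular_not_matched_above_first_nor_between
    {A J : Type*} [Fintype A] [Fintype J]
    (k : ℕ) (r : A → J → ℕ∞) (cat : A → ℕ) (wt : ℕ → ℚ)
    (f : A → J) (s : A → J) (l : A → J)
    (hcat : ∀ x, 1 ≤ cat x ∧ cat x ≤ k)
    (hw : ∀ i j, 1 ≤ i → i < j → j ≤ k → wt j < wt i)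
    (hwpos : ∀ i, 1 ≤ i → i ≤ k → 0 < wt i)
    (hstrict : ∀ x p q, r x p < ⊤ → r x q < ⊤ → r x p = r x q → p = q)
    (hlast : ∀ x, r x (l x) < ⊤ ∧ (∀ p, r x p < ⊤ → p ≠ l x → r x p < r x (l x)) ∧
      ∀ y, r y (l x) < ⊤ → y = x)
    (hfirst : ∀ x, r x (f x) < ⊤ ∧ (∀ j, j < cat x → ¬ FJob cat f j (f x)) ∧
      ∀ p, r x p < ⊤ → r x p < r x (f x) → ∃ j, j < cat x ∧ FJob cat f j p)
    (hsecond : ∀ x, r x (s x) < ⊤ ∧ (∀ j, j ≤ cat x → ¬ FJob cat f j (s x)) ∧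
      ∀ p, r x p < ⊤ → r x p < r x (s x) → ∃ j, j ≤ cat x ∧ FJob cat f j p)
    (M : A → Option J) (hpop : Popular r (fun z => wt (cat z)) M) (x : A) :
    ∀ p, M x = some p →
      ¬ r x p < r x (f x) ∧ ¬ (r x (f x) < r x p ∧ r x p < r x (s x)) := by
  intro p hp
  have hplt := hpop.1.1 x p hp
  have holder : ∀ j, FJob cat f j p → cat x = j ∧ f x = p := by
    intro j hF
    obtain ⟨y, hy, h⟩ :=
      fjob_holder k r cat wt f hcat hw hwpos hstrict hfirst M hpop j p hF
    rwa [hpop.1.2 x y p hp hy]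
  constructor
  · intro h
    obtain ⟨j, hj, hF⟩ := (hfirst x).2.2 p hplt h
    have := (holder j hF).1
    omega
  · rintro ⟨h1, h2⟩
    obtain ⟨j, -, hF⟩ := (hsecond x).2.2 p hplt h2
    rw [(holder j hF).2] at h1
    exact lt_irrefl _ h1
end

section
/- Suppose w_i ≥ 2·w_{i+1} for all i < k (with strict preference lists). Then every well-formed matching is popular. -/
/-!
The proof is a charging argument. Fix a well-formed matching `M` and a rival matching `M'`, and
let `x` be an applicant who prefers `M'`. The job `M' x` is better than `M x`, so it is an
`f_j`-job with `j ≤ cat x`, and `j < cat x` if `M x = f x`. As `M` is well-formed, that job is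
held in `M` by some `n x` of category `j` with `f (n x) = M (n x) = M' x`. The applicant `n x`
loses this job in `M'`, so its rank changes: it is either a loser, or a winner matched in `M` to
its own `f`-job.

Let `I` be the set of winners, `F ⊆ I` the winners matched in `M` to their `f`-job, and `L` the
set of losers. The spread of the weights gives `2 w(x) ≤ w(n x)` on `F` and `w(x) ≤ w(n x)` on
`I \ F`. The map `n` is injective on `I`, with values in `F ∪ L`, so
`w(I) + w(F) ≤ w(n(I)) ≤ w(F) + w(L)`, and therefore `w(I) ≤ w(L)`
(`sum_winners_le_sum_losers`).
-/

/-- The counting step: if `n` maps the winners `I` injectively into `L ∪ F`, and the weight of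
`n x` covers that of `x`, twice over when `x ∈ F`, then the winners weigh at most as much as the
losers `L`. -/
lemma sum_winners_le_sum_losers {A : Type*} [DecidableEq A] (w : A → ℚ) (hwt : ∀ x, 0 ≤ w x)
    (I L F : Finset A) (hFI : F ⊆ I) (n : A → A)
    (hinj : Set.InjOn n I) (hmaps : ∀ x ∈ I, n x ∈ F ∪ L)
    (h1 : ∀ x ∈ I, w x ≤ w (n x)) (h2 : ∀ x ∈ F, 2 * w x ≤ w (n x)) :
    ∑ x ∈ I, w x ≤ ∑ x ∈ L, w x := by
  have hdouble : ∑ x ∈ I, w x + ∑ x ∈ F, w x ≤ ∑ x ∈ I, w (n x) := by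
    rw [← Finset.sum_sdiff hFI, ← Finset.sum_sdiff (f := fun x => w (n x)) hFI, add_assoc]
    refine add_le_add (Finset.sum_le_sum fun x hx => h1 x (Finset.mem_sdiff.1 hx).1) ?_
    rw [← Finset.sum_add_distrib]
    exact Finset.sum_le_sum fun x hx => by linarith [h2 x hx]
  have himage : ∑ x ∈ I, w (n x) ≤ ∑ x ∈ F ∪ L, w x := by
    rw [← Finset.sum_image (f := w) hinj]
    exact Finset.sum_le_sum_of_subset_of_nonneg (Finset.image_subset_iff.2 hmaps)
      fun x _ _ => hwt x
  have hunion : ∑ x ∈ F ∪ L, w x ≤ ∑ x ∈ F, w x + ∑ x ∈ L, w x := by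
    rw [← Finset.sum_union_inter]
    exact le_add_of_nonneg_right (Finset.sum_nonneg fun x _ => hwt x)
  linarith


/-- A matching is well-formed (strict lists) if every `f_i`-job `p` is matched to an
applicant of category `i` whose first job is `p`, and every applicant is matched
either to its first job or to its second job. -/
def WellFormed {A J : Type*} (cat : A → ℕ) (f s : A → J) (M : A → Option J) : Prop :=
  (∀ i p, FJob cat f i p → ∃ x, cat x = i ∧ f x = p ∧ M x = some p) ∧
  ∀ x, M x = some (f x) ∨ M x = some (s x)

/-- If `w i ≥ 2 * w (i+1)` for all `i < k`, then every well-formed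
matching (strict lists) is popular. -/
theorem wellFormed_popular_of_spread_weights
    {A J : Type*} [Fintype A] [Fintype J]
    (k : ℕ) (r : A → J → ℕ∞) (cat : A → ℕ) (wt : ℕ → ℚ)
    (f : A → J) (s : A → J) (l : A → J)
    (hcat : ∀ x, 1 ≤ cat x ∧ cat x ≤ k)
    (hw : ∀ i j, 1 ≤ i → i < j → j ≤ k → wt j < wt i)
    (hwpos : ∀ i, 1 ≤ i → i ≤ k → 0 < wt i)
    (hstrict : ∀ x p q, r x p < ⊤ → r x q < ⊤ → r x p = r x q → p = q)
    (hlast : ∀ x, r x (l x) < ⊤ ∧ (∀ p, r x p < ⊤ → p ≠ l x → r x p < r x (l x)) ∧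
      ∀ y, r y (l x) < ⊤ → y = x)
    (hfirst : ∀ x, r x (f x) < ⊤ ∧ (∀ j, j < cat x → ¬ FJob cat f j (f x)) ∧
      ∀ p, r x p < ⊤ → r x p < r x (f x) → ∃ j, j < cat x ∧ FJob cat f j p)
    (hsecond : ∀ x, r x (s x) < ⊤ ∧ (∀ j, j ≤ cat x → ¬ FJob cat f j (s x)) ∧
      ∀ p, r x p < ⊤ → r x p < r x (s x) → ∃ j, j ≤ cat x ∧ FJob cat f j p)
    (hspread : ∀ i, 1 ≤ i → i < k → 2 * wt (i + 1) ≤ wt i) :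
    ∀ M, IsMatching r M → WellFormed cat f s M →
      Popular r (fun z => wt (cat z)) M := by
  classical
  intro M hM hWF
  refine ⟨hM, fun M' hM' => ?_⟩
  -- The job that a winner gets in `M'` is held in `M` by an applicant whose `f`-job it is.
  have key : ∀ x, ∃ y, mrank r M' x < mrank r M x →
      M' x = some (f y) ∧ M y = some (f y) ∧ cat y ≤ cat x ∧
        (M x = some (f x) → cat y < cat x) := by
    intro x
    by_cases hx : mrank r M' x < mrank r M x
    swap
    · exact ⟨x, fun h => absurd h hx⟩
    obtain ⟨p, hp⟩ : ∃ p, M' x = some p := by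
      cases h : M' x with
      | none => simp [mrank, h] at hx
      | some p => exact ⟨p, rfl⟩
    have hpr := hM'.1 x p hp
    by_cases hF : M x = some (f x)
    · obtain ⟨j, hj, hjob⟩ := (hfirst x).2.2 p hpr (by simpa [mrank, hp, hF] using hx)
      obtain ⟨y, rfl, rfl, hy⟩ := hWF.1 j p hjob
      exact ⟨y, fun _ => ⟨hp, hy, hj.le, fun _ => hj⟩⟩
    · have hS := (hWF.2 x).resolve_left hF
      obtain ⟨j, hj, hjob⟩ := (hsecond x).2.2 p hpr (by simpa [mrank, hp, hS] using hx)
      obtain ⟨y, rfl, rfl, hy⟩ := hWF.1 j p hjob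
      exact ⟨y, fun _ => ⟨hp, hy, hj, fun h => absurd h hF⟩⟩
  choose n hn using key
  have hwt : ∀ x, 0 ≤ wt (cat x) := fun x => (hwpos _ (hcat x).1 (hcat x).2).le
  have hanti : ∀ i j, 1 ≤ i → i ≤ j → j ≤ k → wt j ≤ wt i := by
    intro i j hi hij hj
    rcases hij.eq_or_lt with rfl | h
    · exact le_rfl
    · exact (hw i j hi h hj).le
  have hsum := sum_winners_le_sum_losers (fun z => wt (cat z)) hwt
    (Finset.univ.filter fun x => mrank r M' x < mrank r M x)
    (Finset.univ.filter fun x => mrank r M x < mrank r M' x)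
    (Finset.univ.filter fun x => mrank r M' x < mrank r M x ∧ M x = some (f x))
    (fun x hx => by simp at hx ⊢; exact hx.1) n
    (by
      intro x hx y hy hxy
      simp only [Finset.coe_filter, Finset.mem_univ, true_and, Set.mem_ofPred_eq] at hx hy
      have h1 := (hn x hx).1
      rw [hxy] at h1
      exact hM'.2 x y _ h1 (hn y hy).1)
    (by
      intro x hx
      simp only [Finset.mem_filter, Finset.mem_univ, true_and, Finset.mem_union] at hx ⊢
      obtain ⟨hx', hy, -, -⟩ := hn x hx
      -- If the rank of `n x` did not change, strictness would give it the job `f (n x)` in `M'`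
      -- as well, forcing `n x = x` and contradicting that `x` improves.
      have hne : mrank r M' (n x) ≠ mrank r M (n x) := by
        intro heq
        have hr := (hfirst (n x)).1
        cases hq : M' (n x) with
        | none =>
          simp only [mrank, hq, hy, Option.elim] at heq
          exact hr.ne heq.symm
        | some q =>
          simp only [mrank, hq, hy, Option.elim] at heq
          obtain rfl := hstrict (n x) q _ (hM'.1 _ _ hq) hr heq
          have hxn := hM'.2 x (n x) _ hx' hq
          rw [← hxn] at hx' hy
          simp [mrank, hx', hy] at hx
      rcases lt_or_gt_of_ne hne with h | h
      · exact Or.inl ⟨h, hy⟩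
      · exact Or.inr h)
    (by
      intro x hx
      simp only [Finset.mem_filter, Finset.mem_univ, true_and] at hx
      exact hanti _ _ (hcat _).1 (hn x hx).2.2.1 (hcat x).2)
    (by
      intro x hx
      simp only [Finset.mem_filter, Finset.mem_univ, true_and] at hx
      have hlt := (hn x hx.1).2.2.2 hx.2
      have hk := (hcat x).2
      have ha := hanti (cat (n x) + 1) (cat x) (by omega) hlt hk
      have hb := hspread (cat (n x)) (hcat _).1 (by omega)
      show 2 * wt (cat x) ≤ wt (cat (n x))
      linarith)
  rw [MorePopular, satisfaction, not_lt, sub_nonpos]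
  rw [Finset.sum_filter, Finset.sum_filter] at hsum
  convert hsum
end

section
/- Let M be a well-formed matching (with strict preference lists) and let p_0, x_0, …, p_s, x_s be a promotion path with respect to M. Then for every i < s, if x_i ∈ C_a and x_{i+1} ∈ C_b then b < a; consequently every promotion path is simple (no applicant occurs twice) and contains at most k applicants. -/
/-- A promotion path `p 0, x 0, …, p n, x n` with respect to a matching `M`:
`p i = f (x i)`, `(x i, p i) ∈ M`, and for `i < n` applicant `x i` prefers
`p (i+1)` to `p i`. -/
def PromotionPath {A J : Type*} (r : A → J → ℕ∞) (f : A → J) (M : A → Option J)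
    (n : ℕ) (x : ℕ → A) (p : ℕ → J) : Prop :=
  (∀ i ≤ n, p i = f (x i) ∧ M (x i) = some (p i)) ∧
  ∀ i < n, r (x i) (p (i+1)) < r (x i) (p i)

/-- The cost of a promotion path: `w (x n) - w (x 0) - … - w (x (n-1))`. -/
def pathCost {A : Type*} (wt : ℕ → ℚ) (cat : A → ℕ) (n : ℕ) (x : ℕ → A) : ℚ :=
  wt (cat (x n)) - ∑ i ∈ Finset.range n, wt (cat (x i))

/-- Along a promotion path with respect to a well-formed matching
(strict lists), categories strictly decrease; consequently the path is simple and
contains at most `k` applicants. -/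
theorem promotionPath_categories_decrease
    {A J : Type*} [Fintype A] [Fintype J]
    (k : ℕ) (r : A → J → ℕ∞) (cat : A → ℕ) (wt : ℕ → ℚ)
    (f : A → J) (s : A → J) (l : A → J)
    (hcat : ∀ x, 1 ≤ cat x ∧ cat x ≤ k)
    (hw : ∀ i j, 1 ≤ i → i < j → j ≤ k → wt j < wt i)
    (hwpos : ∀ i, 1 ≤ i → i ≤ k → 0 < wt i)
    (hstrict : ∀ x p q, r x p < ⊤ → r x q < ⊤ → r x p = r x q → p = q)
    (hlast : ∀ x, r x (l x) < ⊤ ∧ (∀ p, r x p < ⊤ → p ≠ l x → r x p < r x (l x)) ∧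
      ∀ y, r y (l x) < ⊤ → y = x)
    (hfirst : ∀ x, r x (f x) < ⊤ ∧ (∀ j, j < cat x → ¬ FJob cat f j (f x)) ∧
      ∀ p, r x p < ⊤ → r x p < r x (f x) → ∃ j, j < cat x ∧ FJob cat f j p)
    (hsecond : ∀ x, r x (s x) < ⊤ ∧ (∀ j, j ≤ cat x → ¬ FJob cat f j (s x)) ∧
      ∀ p, r x p < ⊤ → r x p < r x (s x) → ∃ j, j ≤ cat x ∧ FJob cat f j p)
    (M : A → Option J) (hM : IsMatching r M) (hwf : WellFormed cat f s M)
    (n : ℕ) (x : ℕ → A) (p : ℕ → J) (hpath : PromotionPath r f M n x p) :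
    (∀ i < n, cat (x (i + 1)) < cat (x i)) ∧
    (∀ i j, i ≤ n → j ≤ n → x i = x j → i = j) ∧
    n + 1 ≤ k := by
  have step : ∀ i < n, cat (x (i + 1)) < cat (x i) := by
    intro i hi
    obtain ⟨hpi, hMi⟩ := hpath.1 i hi.le
    obtain ⟨-, hMi'⟩ := hpath.1 (i + 1) hi
    have hlt := hpath.2 i hi
    rw [hpi] at hlt
    obtain ⟨j, hj, hF⟩ := (hfirst (x i)).2.2 _ (hlt.trans (hfirst (x i)).1) hlt
    obtain ⟨y, hy, -, hMy⟩ := hwf.1 j _ hF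
    -- `y` and `x (i + 1)` both hold the job `p (i + 1)`, so they coincide.
    rw [← hM.2 y _ _ hMy hMi', hy]
    exact hj
  have anti : ∀ i d, i + d ≤ n → cat (x (i + d)) + d ≤ cat (x i) := by
    intro i d
    induction d with
    | zero => intro _; simp
    | succ d ih =>
      intro h
      have h₁ := ih (by omega)
      have h₂ := step (i + d) (by omega)
      rw [← add_assoc i d 1]
      omega
  have ne : ∀ i j, i < j → j ≤ n → x i ≠ x j := by
    intro i j hij hj h
    have h₁ := anti i (j - i) (by omega)
    rw [Nat.add_sub_cancel' hij.le, ← h] at h₁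
    omega
  refine ⟨step, fun i j hi hj h => ?_, ?_⟩
  · rcases lt_trichotomy i j with hij | hij | hij
    · exact absurd h (ne i j hij hj)
    · exact hij
    · exact absurd h.symm (ne j i hij hi)
  · have h₁ := anti 0 n (by omega)
    have h₂ := (hcat (x (0 + n))).1
    have h₃ := (hcat (x 0)).2
    omega
end

section
/- Let M be a well-formed matching (with strict preference lists). Suppose there exist an applicant y and a promotion path p_0, x_0, …, p_s, x_s with respect to M such that y prefers p_0 to its job in M, y ≠ x_i for all i, and w(y) > w(x_s) − w(x_0) − … − w(x_{s−1}) (the cost of the path). Then M is not popular: the matching obtained from M by matching y to p_0, matching x_i to p_{i+1} for all i < s, and leaving x_s unmatched is more popular than M. -/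
/-- Consecutive applicants on a promotion path have strictly decreasing category index, since
anything an applicant prefers to its first job is an `f_j`-job of a smaller category `j`. -/
theorem PromotionPath.cat_succ_lt {A J : Type*} {r : A → J → ℕ∞} {cat : A → ℕ} {f s : A → J}
    (hfirst : ∀ x, r x (f x) < ⊤ ∧ (∀ j, j < cat x → ¬ FJob cat f j (f x)) ∧
      ∀ p, r x p < ⊤ → r x p < r x (f x) → ∃ j, j < cat x ∧ FJob cat f j p)
    {M : A → Option J} (hM : IsMatching r M) (hwf : WellFormed cat f s M)
    {n : ℕ} {x : ℕ → A} {p : ℕ → J} (hpath : PromotionPath r f M n x p)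
    {i : ℕ} (hi : i < n) : cat (x (i + 1)) < cat (x i) := by
  have hlt := hpath.2 i hi
  obtain ⟨j, hj, hF⟩ := (hfirst (x i)).2.2 (p (i + 1)) (lt_top_of_lt hlt)
    ((hpath.1 i hi.le).1 ▸ hlt)
  obtain ⟨z, hz, -, hMz⟩ := hwf.1 j _ hF
  rw [hM.2 _ _ _ (hpath.1 (i + 1) hi).2 hMz, hz]
  exact hj

theorem PromotionPath.injOn {A J : Type*} {r : A → J → ℕ∞} {cat : A → ℕ} {f s : A → J}
    (hfirst : ∀ x, r x (f x) < ⊤ ∧ (∀ j, j < cat x → ¬ FJob cat f j (f x)) ∧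
      ∀ p, r x p < ⊤ → r x p < r x (f x) → ∃ j, j < cat x ∧ FJob cat f j p)
    {M : A → Option J} (hM : IsMatching r M) (hwf : WellFormed cat f s M)
    {n : ℕ} {x : ℕ → A} {p : ℕ → J} (hpath : PromotionPath r f M n x p)
    {i j : ℕ} (hi : i ≤ n) (hj : j ≤ n) (h : x i = x j) : i = j := by
  have key : ∀ a b, a < b → b ≤ n → cat (x b) < cat (x a) := by
    intro a b hab
    induction b, hab using Nat.le_induction with
    | base => exact fun hb => hpath.cat_succ_lt hfirst hM hwf hb
    | succ b _ ih => exact fun hb => (hpath.cat_succ_lt hfirst hM hwf hb).trans (ih (by omega))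
  rcases lt_trichotomy i j with hij | hij | hij
  · exact absurd (h ▸ key i j hij hj) (lt_irrefl _)
  · exact hij
  · exact absurd (h ▸ key j i hij hi) (lt_irrefl _)

/-- Let `M` be a well-formed matching (strict lists) and let
`p 0, x 0, …, p n, x n` be a promotion path w.r.t. `M`.  If an applicant `y`
not on the path prefers `p 0` to its job in `M` and `w y` exceeds the cost of the
path, then the matching `M'` obtained from `M` by matching `y` to `p 0`, matching
`x i` to `p (i+1)` for `i < n`, and leaving `x n` unmatched, is a matching that is
more popular than `M`; in particular `M` is not popular. -/
theorem promotionPath_beats_wellFormed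
    {A J : Type*} [Fintype A] [Fintype J]
    (k : ℕ) (r : A → J → ℕ∞) (cat : A → ℕ) (wt : ℕ → ℚ)
    (f : A → J) (s : A → J) (l : A → J)
    (hcat : ∀ x, 1 ≤ cat x ∧ cat x ≤ k)
    (hw : ∀ i j, 1 ≤ i → i < j → j ≤ k → wt j < wt i)
    (hwpos : ∀ i, 1 ≤ i → i ≤ k → 0 < wt i)
    (hstrict : ∀ x p q, r x p < ⊤ → r x q < ⊤ → r x p = r x q → p = q)
    (hlast : ∀ x, r x (l x) < ⊤ ∧ (∀ p, r x p < ⊤ → p ≠ l x → r x p < r x (l x)) ∧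
      ∀ y, r y (l x) < ⊤ → y = x)
    (hfirst : ∀ x, r x (f x) < ⊤ ∧ (∀ j, j < cat x → ¬ FJob cat f j (f x)) ∧
      ∀ p, r x p < ⊤ → r x p < r x (f x) → ∃ j, j < cat x ∧ FJob cat f j p)
    (hsecond : ∀ x, r x (s x) < ⊤ ∧ (∀ j, j ≤ cat x → ¬ FJob cat f j (s x)) ∧
      ∀ p, r x p < ⊤ → r x p < r x (s x) → ∃ j, j ≤ cat x ∧ FJob cat f j p)
    (M : A → Option J) (hM : IsMatching r M) (hwf : WellFormed cat f s M)
    (n : ℕ) (x : ℕ → A) (p : ℕ → J) (hpath : PromotionPath r f M n x p)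
    (y : A) (hy : ∀ i ≤ n, y ≠ x i)
    (hpref : r y (p 0) < mrank r M y)
    (hcost : pathCost wt cat n x < wt (cat y))
    (M' : A → Option J)
    (hM'y : M' y = some (p 0))
    (hM'x : ∀ i < n, M' (x i) = some (p (i + 1)))
    (hM'last : M' (x n) = none)
    (hM'rest : ∀ z, z ≠ y → (∀ i ≤ n, z ≠ x i) → M' z = M z) :
    IsMatching r M' ∧ MorePopular r (fun z => wt (cat z)) M' M ∧
      ¬ Popular r (fun z => wt (cat z)) M := by
  classical
  have hinj : ∀ i j, i ≤ n → j ≤ n → x i = x j → i = j :=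
    fun i j hi hj h => hpath.injOn hfirst hM hwf hi hj h
  have hpinj : ∀ i j, i ≤ n → j ≤ n → p i = p j → i = j := by
    intro i j hi hj h
    exact hinj i j hi hj (hM.2 _ _ _ (hpath.1 i hi).2 (h ▸ (hpath.1 j hj).2))
  -- Every applicant is `y`, an inner path applicant, the last path applicant, or unaffected.
  have hcases : ∀ z, z = y ∨ (∃ i, i < n ∧ z = x i) ∨ z = x n ∨
      (z ≠ y ∧ ∀ i ≤ n, z ≠ x i) := by
    intro z
    by_cases h1 : z = y
    · exact Or.inl h1
    by_cases h2 : ∃ i ≤ n, z = x i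
    · obtain ⟨i, hi, rfl⟩ := h2
      rcases hi.lt_or_eq with h | rfl
      · exact Or.inr (Or.inl ⟨i, h, rfl⟩)
      · exact Or.inr (Or.inr (Or.inl rfl))
    · push Not at h2
      exact Or.inr (Or.inr (Or.inr ⟨h1, h2⟩))
  have hM' : IsMatching r M' := by
    constructor
    · intro z q hz
      rcases hcases z with rfl | ⟨i, hi, rfl⟩ | rfl | ⟨h1, h2⟩
      · obtain rfl : p 0 = q := by simpa [hM'y] using hz
        exact lt_top_of_lt hpref
      · obtain rfl : p (i + 1) = q := by simpa [hM'x i hi] using hz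
        exact lt_top_of_lt (hpath.2 i hi)
      · simp [hM'last] at hz
      · exact hM.1 z q (hM'rest z h1 h2 ▸ hz)
    · -- A job assigned by `M'` either is on the path, with its new holder known, or keeps its holder
      -- from `M` and is off the path.
      have hsrc : ∀ z q, M' z = some q → (z = y ∧ q = p 0) ∨
          (∃ i, i < n ∧ z = x i ∧ q = p (i + 1)) ∨ (M z = some q ∧ ∀ i ≤ n, q ≠ p i) := by
        intro z q hz
        rcases hcases z with rfl | ⟨i, hi, rfl⟩ | rfl | ⟨h1, h2⟩
        · exact Or.inl ⟨rfl, by simpa [hM'y, eq_comm] using hz⟩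
        · exact Or.inr (Or.inl ⟨i, hi, rfl, by simpa [hM'x i hi, eq_comm] using hz⟩)
        · simp [hM'last] at hz
        · have hMz : M z = some q := hM'rest z h1 h2 ▸ hz
          refine Or.inr (Or.inr ⟨hMz, fun i hi hq => h2 i hi ?_⟩)
          exact hM.2 _ _ _ hMz (hq ▸ (hpath.1 i hi).2)
      intro a b q ha hb
      rcases hsrc a q ha with ⟨rfl, h1⟩ | ⟨i, hi, rfl, h1⟩ | ⟨h1, h1'⟩ <;>
        rcases hsrc b q hb with ⟨rfl, h2⟩ | ⟨j, hj, rfl, h2⟩ | ⟨h2, h2'⟩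
      · rfl
      · exact absurd (hpinj 0 (j + 1) (by omega) hj (h1 ▸ h2)) (by omega)
      · exact absurd h1 (h2' 0 (by omega))
      · exact absurd (hpinj 0 (i + 1) (by omega) hi (h2 ▸ h1)) (by omega)
      · have := hpinj (i + 1) (j + 1) hi hj (h1 ▸ h2)
        rw [Nat.succ_injective this]
      · exact absurd h1 (h2' (i + 1) hi)
      · exact absurd h2 (h1' 0 (by omega))
      · exact absurd h2 (h1' (j + 1) hj)
      · exact hM.2 _ _ _ h1 h2
  have hpop : MorePopular r (fun z => wt (cat z)) M' M := by
    unfold MorePopular satisfaction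
    rw [← Finset.sum_sub_distrib]
    set g : A → ℚ := fun z => (if mrank r M' z < mrank r M z then wt (cat z) else 0) -
      (if mrank r M z < mrank r M' z then wt (cat z) else 0) with hg
    have hup : ∀ z, mrank r M' z < mrank r M z → g z = wt (cat z) := by
      intro z h
      simp [hg, h, h.le.not_gt]
    have hgy : g y = wt (cat y) := hup y (by simpa [mrank, hM'y] using hpref)
    have hgx : ∀ i < n, g (x i) = wt (cat (x i)) := by
      intro i hi
      refine hup _ ?_
      simpa [mrank, hM'x i hi, (hpath.1 i hi.le).2] using hpath.2 i hi
    have hgn : g (x n) = - wt (cat (x n)) := by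
      have h : mrank r M (x n) < mrank r M' (x n) := by
        have hMn := (hpath.1 n le_rfl).2
        simpa [mrank, hM'last, hMn] using hM.1 _ _ hMn
      simp [hg, h, h.le.not_gt]
    have hsum : ∑ z, g z = ∑ z ∈ insert y ((Finset.range (n + 1)).image x), g z := by
      symm
      refine Finset.sum_subset (Finset.subset_univ _) fun z _ hz => ?_
      have h1 : z ≠ y := fun h => hz (by simp [h])
      have h2 : ∀ i ≤ n, z ≠ x i := fun i hi h =>
        hz (Finset.mem_insert_of_mem
          (Finset.mem_image.2 ⟨i, Finset.mem_range.2 (by omega), h.symm⟩))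
      simp [hg, mrank, hM'rest z h1 h2]
    have hynot : y ∉ (Finset.range (n + 1)).image x := by
      intro h
      obtain ⟨i, hi, h⟩ := Finset.mem_image.1 h
      exact hy i (Nat.lt_succ_iff.1 (Finset.mem_range.1 hi)) h.symm
    have himage : ∑ z ∈ (Finset.range (n + 1)).image x, g z =
        ∑ i ∈ Finset.range (n + 1), g (x i) := by
      refine Finset.sum_image fun i hi j hj h => hinj i j ?_ ?_ h
      · exact Nat.lt_succ_iff.1 (by simpa using hi)
      · exact Nat.lt_succ_iff.1 (by simpa using hj)
    have hinner : ∑ i ∈ Finset.range n, g (x i) = ∑ i ∈ Finset.range n, wt (cat (x i)) :=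
      Finset.sum_congr rfl fun i hi => hgx i (Finset.mem_range.1 hi)
    change 0 < ∑ z, g z
    rw [hsum, Finset.sum_insert hynot, himage, Finset.sum_range_succ, hinner, hgy, hgn]
    unfold pathCost at hcost
    linarith
  exact ⟨hM', hpop, fun h => h.2 M' hM' hpop⟩
end

section
/- Let M be a well-formed matching and M' any matching (with strict preference lists). For each applicant y who prefers M' to M, define the induced promotion path with respect to M as follows: p_0 = M'(y), x_0 = M(p_0), and inductively, if x_i prefers M' to M then p_{i+1} = M'(x_i) and x_{i+1} = M(p_{i+1}), and otherwise the path ends at x_i. Then this induced sequence is a well-defined finite promotion path with respect to M, and if for every applicant y preferring M' to M the cost of the promotion path induced by y is at least w(y), then M' is not more popular than M. -/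
/-!
Let `P` be the set of applicants preferring `M'` to `M`, and let `g y` be the owner in `M` of the
job `M' y`. If `y ∈ P`, then `M' y` beats the job `f y` or `s y` held by `y`, hence is an
`f_j`-job, and well-formedness makes `M' y = f (g y) = M (g y)`. If moreover `y` holds `f y`
(as every applicant on the path does), then `j < cat y`, so the category strictly decreases along
the orbit of `g` and the orbit leaves `P` (`exists_exit`). Its first point outside `P` has lost its
`M`-job to somebody else, so, lists being strict, it strictly prefers `M` to `M'`.

For the weights, `g` is injective on `P`, as `M'` is a matching. Hence the elements of `P` whose
orbits leave `P` at a given point `z` all lie on the orbit of the one with the longest orbit, and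
the cost bound for that one says that their total weight is at most the weight of `z`. Summing
over `z` gives the result (`sum_le_sum_exit`).
-/

/-- Orbits of a map injective on `P` that stay in `P` for `m` steps and then agree are equal. -/
theorem eq_of_iterate_eq {A : Type*} {P : A → Prop} {g : A → A}
    (hinj : ∀ a b, P a → P b → g a = g b → a = b) (m : ℕ) :
    ∀ u v, (∀ i < m, P (g^[i] u)) → (∀ i < m, P (g^[i] v)) → g^[m] u = g^[m] v → u = v := by
  induction m with
  | zero => intro u v _ _ h; exact h
  | succ m ih =>
    intro u v hu hv h
    refine hinj u v (hu 0 (by omega)) (hv 0 (by omega)) (ih _ _ ?_ ?_ h)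
    · intro i hi; exact hu (i + 1) (by omega)
    · intro i hi; exact hv (i + 1) (by omega)

/-- If `g` is injective on `P`, every orbit from `P` leaves `P` into `N`, and the weight of the part
of the orbit inside `P` is at most the weight of its exit point, then `P` weighs at most as much
as `N`. Here `n y + 1` is the exit time of `y`. -/
theorem sum_le_sum_exit {A : Type*} [DecidableEq A] (P N : Finset A) (g : A → A) (w : A → ℚ)
    (hw : ∀ x, 0 ≤ w x) (hinj : ∀ a b, a ∈ P → b ∈ P → g a = g b → a = b) (n : A → ℕ)
    (hP : ∀ y ∈ P, ∀ i ≤ n y, g^[i] y ∈ P) (hN : ∀ y ∈ P, g^[n y + 1] y ∈ N)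
    (hc : ∀ y ∈ P, ∑ i ∈ Finset.range (n y + 1), w (g^[i] y) ≤ w (g^[n y + 1] y)) :
    ∑ y ∈ P, w y ≤ ∑ z ∈ N, w z := by
  rw [← Finset.sum_fiberwise_of_maps_to hN]
  refine Finset.sum_le_sum fun z _ => ?_
  rcases (P.filter fun y => g^[n y + 1] y = z).eq_empty_or_nonempty with h | h
  · rw [h]; simpa using hw z
  · obtain ⟨y, hy, hmax⟩ := Finset.exists_max_image _ n h
    obtain ⟨hyP, hyz⟩ := Finset.mem_filter.1 hy
    have hsub : (P.filter fun y => g^[n y + 1] y = z) ⊆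
        (Finset.range (n y + 1)).image fun i => g^[i] y := by
      intro y' hy'
      have hle := hmax y' hy'
      obtain ⟨hyP', hyz'⟩ := Finset.mem_filter.1 hy'
      refine Finset.mem_image.2 ⟨n y - n y', by simp, ?_⟩
      -- both orbits stay in `P` for `n y' + 1` steps and then arrive at `z`
      refine eq_of_iterate_eq (P := (· ∈ P)) hinj (n y' + 1) _ _ ?_ ?_ ?_
      · intro i hi
        rw [← Function.iterate_add_apply]
        exact hP y hyP _ (by omega)
      · intro i hi
        exact hP y' hyP' i (by omega)
      · rw [← Function.iterate_add_apply, hyz', ← hyz,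
          show n y' + 1 + (n y - n y') = n y + 1 by omega]
    calc _ ≤ ∑ a ∈ (Finset.range (n y + 1)).image (fun i => g^[i] y), w a :=
          Finset.sum_le_sum_of_subset_of_nonneg hsub fun _ _ _ => hw _
      _ ≤ ∑ i ∈ Finset.range (n y + 1), w (g^[i] y) :=
          Finset.sum_image_le_of_nonneg fun _ _ => hw _
      _ ≤ w z := hyz ▸ hc y hyP

/-- If `g` maps `P` into `Q` and decreases `cat` on `P ∩ Q`, then orbits from `Q` leave `P`. -/
theorem exists_exit {A : Type*} {P Q : A → Prop} {g : A → A} (cat : A → ℕ)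
    (hQ : ∀ y, P y → Q (g y)) (hdec : ∀ y, P y → Q y → cat (g y) < cat y) (c : ℕ) :
    ∀ x, Q x → cat x = c → ∃ n, (∀ i < n, P (g^[i] x)) ∧ ¬ P (g^[n] x) := by
  induction c using Nat.strong_induction_on with
  | _ c ih =>
    intro x hx hc
    by_cases hp : P x
    · obtain ⟨n, h1, h2⟩ := ih _ (hc ▸ hdec x hp hx) (g x) (hQ x hp) rfl
      refine ⟨n + 1, ?_, h2⟩
      rintro (_ | i) hi
      · exact hp
      · exact h1 i (by omega)
    · exact ⟨0, by omega, hp⟩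


/-- The promotion path `p 0, x 0, …, p n, x n` induced (w.r.t. a well-formed matching
`M`) by an applicant `y` who prefers `M'` to `M`: `p 0 = M' y`, `x 0 = M (p 0)`, and
inductively, while `x i` prefers `M'` to `M`, `p (i+1) = M' (x i)` and
`x (i+1) = M (p (i+1))`; the path ends at the first `x n` not preferring `M'` to `M`. -/
def InducedPath {A J : Type*} (r : A → J → ℕ∞) (f : A → J) (M M' : A → Option J)
    (y : A) (n : ℕ) (x : ℕ → A) (p : ℕ → J) : Prop :=
  M' y = some (p 0) ∧
  (∀ i ≤ n, p i = f (x i) ∧ M (x i) = some (p i)) ∧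
  (∀ i < n, mrank r M' (x i) < mrank r M (x i) ∧ M' (x i) = some (p (i + 1))) ∧
  ¬ mrank r M' (x n) < mrank r M (x n)

/-- For a well-formed matching `M` (strict lists) and any matching
`M'`, every applicant `y` preferring `M'` to `M` induces a finite promotion path
w.r.t. `M`; moreover, if for every such `y` the cost of the induced path is at least
`w y`, then `M'` is not more popular than `M`. -/
theorem inducedPath_exists_and_cost_bound
    {A J : Type*} [Fintype A] [Fintype J]
    (k : ℕ) (r : A → J → ℕ∞) (cat : A → ℕ) (wt : ℕ → ℚ)
    (f : A → J) (s : A → J) (l : A → J)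
    (hcat : ∀ x, 1 ≤ cat x ∧ cat x ≤ k)
    (hw : ∀ i j, 1 ≤ i → i < j → j ≤ k → wt j < wt i)
    (hwpos : ∀ i, 1 ≤ i → i ≤ k → 0 < wt i)
    (hstrict : ∀ x p q, r x p < ⊤ → r x q < ⊤ → r x p = r x q → p = q)
    (hlast : ∀ x, r x (l x) < ⊤ ∧ (∀ p, r x p < ⊤ → p ≠ l x → r x p < r x (l x)) ∧
      ∀ y, r y (l x) < ⊤ → y = x)
    (hfirst : ∀ x, r x (f x) < ⊤ ∧ (∀ j, j < cat x → ¬ FJob cat f j (f x)) ∧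
      ∀ p, r x p < ⊤ → r x p < r x (f x) → ∃ j, j < cat x ∧ FJob cat f j p)
    (hsecond : ∀ x, r x (s x) < ⊤ ∧ (∀ j, j ≤ cat x → ¬ FJob cat f j (s x)) ∧
      ∀ p, r x p < ⊤ → r x p < r x (s x) → ∃ j, j ≤ cat x ∧ FJob cat f j p)
    (M M' : A → Option J) (hM : IsMatching r M) (hwf : WellFormed cat f s M)
    (hM' : IsMatching r M') :
    (∀ y, mrank r M' y < mrank r M y →
        ∃ n x p, InducedPath r f M M' y n x p ∧ PromotionPath r f M n x p) ∧
    ((∀ y n x p, mrank r M' y < mrank r M y → InducedPath r f M M' y n x p →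
        wt (cat y) ≤ pathCost wt cat n x) →
      ¬ MorePopular r (fun z => wt (cat z)) M' M) := by
  classical
  set P : A → Prop := fun y => mrank r M' y < mrank r M y with hPdef
  have hcompl : ∀ y, ∃ z, P y → ∃ p, M' y = some p ∧ p = f z ∧ M z = some p ∧
      (M y = some (f y) → cat z < cat y) := by
    intro y
    by_cases hy : P y
    · have hlt : mrank r M' y < mrank r M y := hy
      obtain ⟨p, hp⟩ : ∃ p, M' y = some p := by
        cases h : M' y with
        | none => simp [mrank, h] at hlt
        | some p => exact ⟨p, rfl⟩
      have hpl := hM'.1 y p hp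
      by_cases hf : M y = some (f y)
      · simp only [mrank, hp, hf, Option.elim] at hlt
        obtain ⟨j, hj, hF⟩ := (hfirst y).2.2 p hpl hlt
        obtain ⟨z, hz, hfz, hMz⟩ := hwf.1 j p hF
        exact ⟨z, fun _ => ⟨p, hp, hfz.symm, hMz, fun _ => hz ▸ hj⟩⟩
      · have hs := (hwf.2 y).resolve_left hf
        simp only [mrank, hp, hs, Option.elim] at hlt
        obtain ⟨j, hj, hF⟩ := (hsecond y).2.2 p hpl hlt
        obtain ⟨z, hz, hfz, hMz⟩ := hwf.1 j p hF
        exact ⟨z, fun _ => ⟨p, hp, hfz.symm, hMz, fun h => absurd h hf⟩⟩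
    · exact ⟨y, fun h => absurd h hy⟩
  choose g hg using hcompl
  have hM'g : ∀ y, P y → M' y = some (f (g y)) ∧ M (g y) = some (f (g y)) := by
    intro y hy
    obtain ⟨p, h1, h2, h3, _⟩ := hg y hy
    exact ⟨h2 ▸ h1, h2 ▸ h3⟩
  have hexit : ∀ y, ∃ n, P y → (∀ i ≤ n, P (g^[i] y)) ∧ ¬ P (g^[n + 1] y) := by
    intro y
    by_cases hy : P y
    · obtain ⟨n, h1, h2⟩ := exists_exit (P := P) (Q := fun x => M x = some (f x)) (g := g) cat
        (fun y hy => (hM'g y hy).2)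
        (fun y hy hq => by obtain ⟨p, _, _, _, h⟩ := hg y hy; exact h hq)
        _ (g y) (hM'g y hy).2 rfl
      refine ⟨n, fun _ => ⟨?_, h2⟩⟩
      rintro (_ | i) hi
      · exact hy
      · exact h1 i (by omega)
    · exact ⟨0, fun h => absurd h hy⟩
  choose n hn using hexit
  have hind : ∀ y, P y →
      InducedPath r f M M' y (n y) (fun i => g^[i + 1] y) (fun i => f (g^[i + 1] y)) := by
    intro y hy
    obtain ⟨h1, h2⟩ := hn y hy
    refine ⟨(hM'g y hy).1, fun i hi => ⟨rfl, ?_⟩, fun i hi => ⟨h1 (i + 1) hi, ?_⟩, h2⟩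
    · have := (hM'g _ (h1 i hi)).2
      rwa [← Function.iterate_succ_apply' g] at this
    · have := (hM'g _ (h1 (i + 1) hi)).1
      rwa [← Function.iterate_succ_apply' g] at this
  refine ⟨fun y hy => ⟨n y, _, _, hind y hy, (hind y hy).2.1, fun i hi => ?_⟩, fun hcost => ?_⟩
  · obtain ⟨_, h2, h3, _⟩ := hind y hy
    have h4 := (h3 i hi).1
    rw [mrank, mrank, (h3 i hi).2, (h2 i hi.le).2] at h4
    exact h4
  · -- an owner displaced from its `M`-job who does not gain must strictly lose
    have hloss : ∀ u, P u → ¬ P (g u) → mrank r M (g u) < mrank r M' (g u) := by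
      intro u hu hgu
      refine lt_of_le_of_ne (not_lt.1 hgu) fun heq => ?_
      obtain ⟨h1, h2⟩ := hM'g u hu
      have hl := hM.1 _ _ h2
      cases h : M' (g u) with
      | none => simp [mrank, h, h2] at heq; simp [heq] at hl
      | some q =>
        simp only [mrank, h, h2, Option.elim] at heq
        have hq := hstrict _ _ _ hl (hM'.1 _ _ h) heq
        have : u = g u := hM'.2 u (g u) q (hq ▸ h1) h
        exact hgu (this ▸ hu)
    have key := sum_le_sum_exit (Finset.univ.filter P)
      (Finset.univ.filter fun x => mrank r M x < mrank r M' x) g (fun z => wt (cat z))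
      (fun x => (hwpos _ (hcat x).1 (hcat x).2).le)
      (fun a b ha hb hab => by
        have ha' := (hM'g a (by simpa using ha)).1
        have hb' := (hM'g b (by simpa using hb)).1
        exact hM'.2 a b _ ha' (hab ▸ hb')) n
      (fun y hy i hi => by
        simpa using (hn y (by simpa using hy)).1 i hi)
      (fun y hy => by
        obtain ⟨h1, h2⟩ := hn y (by simpa using hy)
        rw [Function.iterate_succ_apply'] at h2 ⊢
        simpa using hloss _ (h1 _ le_rfl) h2)
      (fun y hy => by
        have hy' : P y := by simpa using hy
        have := hcost y _ _ _ hy' (hind y hy')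
        simp only [pathCost] at this
        rw [Finset.sum_range_succ']
        simp only [Function.iterate_zero, id]
        linarith)
    simp only [MorePopular, satisfaction, not_lt, sub_nonpos]
    rw [← Finset.sum_filter, ← Finset.sum_filter]
    exact key
end

section
/- With preference lists that may contain ties, for every applicant x the sets f(x) and s(x) are disjoint: f(x) ∩ s(x) = ∅. -/
/-!
The heart of the matter is the Gallai-Edmonds fact that an edge of a bipartite graph never joins
two non-critical vertices (`criticalJob_of_edge`). Suppose `x p` is an edge, `M` is a maximum
matching missing `x` and `N` is a maximum matching missing `p`. Exchanging `M` and `N` along the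
alternating component of `x` gives two matchings of the same total size, so both are maximum, and
the one that agrees with `N` off the component misses both `x` and `p`; adding the edge `x p` to it
contradicts maximality.

If `p` lies in `f x ∩ s x`, then `x` is non-critical in its own graph `G_i` (otherwise `s x = ∅`),
the edge `x p` belongs to `G_i`, and `p` is non-critical in `G_i` by the definition of `s x`.
-/

/-- `M` is a matching of the bipartite graph with edge relation `E`. -/
def IsMatchingOn {A J : Type*} (E : A → J → Prop) (M : A → Option J) : Prop :=
  (∀ x p, M x = some p → E x p) ∧ ∀ x y p, M x = some p → M y = some p → x = y

/-- The size (number of matched applicants, i.e. edges) of a matching. -/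
def msize {A J : Type*} [Fintype A] (M : A → Option J) : ℕ :=
  Finset.card (Finset.univ.filter (fun x => (M x).isSome))

/-- `M` is a maximum matching of the graph with edge relation `E`. -/
def IsMaxMatchingOn {A J : Type*} [Fintype A] (E : A → J → Prop)
    (M : A → Option J) : Prop :=
  IsMatchingOn E M ∧ ∀ M', IsMatchingOn E M' → msize M' ≤ msize M

/-- A job `p` is critical if it is matched in every maximum matching. -/
def CriticalJob {A J : Type*} [Fintype A] (E : A → J → Prop) (p : J) : Prop :=
  ∀ M, IsMaxMatchingOn E M → ∃ x, M x = some p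

/-- An applicant `x` is critical if it is matched in every maximum matching. -/
def CriticalApp {A J : Type*} [Fintype A] (E : A → J → Prop) (x : A) : Prop :=
  ∀ M, IsMaxMatchingOn E M → (M x).isSome

/-- The edge relation of the graph `G_i`: edges between applicants of category at
most `i` and the jobs in their sets `f x`. -/
def Gedge {A J : Type*} (cat : A → ℕ) (f : A → Finset J) (i : ℕ)
    (x : A) (p : J) : Prop :=
  cat x ≤ i ∧ p ∈ f x

/-- The applicants reached from `x` by alternating walks that leave an applicant along an `N`-edge
and arrive at the next one along an `M`-edge. -/
def AltReach {A J : Type*} (M N : A → Option J) (x : A) (a : A) : Prop :=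
  Relation.ReflTransGen (fun a b => ∃ q, N a = some q ∧ M b = some q) x a

/-- Every reachable applicant matched by `M` has a predecessor, since `M` misses the starting
point. -/
lemma AltReach.pred {A J : Type*} {M N : A → Option J} {x a : A} {q : J} (hx : M x = none)
    (h : AltReach M N x a) (ha : M a = some q) : ∃ c, AltReach M N x c ∧ N c = some q := by
  rcases Relation.ReflTransGen.cases_tail h with rfl | ⟨c, hc, q', hN, hM⟩
  · simp [hx] at ha
  · exact ⟨c, hc, by rw [hN, ← hM, ha]⟩

open Classical in
/-- Two matchings exchanged on a set of applicants have the same total size as before. -/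
lemma msize_exchange {A J : Type*} [Fintype A] (M N : A → Option J) (S : A → Prop) :
    msize (fun a => if S a then N a else M a) + msize (fun a => if S a then M a else N a)
      = msize M + msize N := by
  simp only [msize, Finset.card_filter, ← Finset.sum_add_distrib]
  refine Finset.sum_congr rfl fun a _ => ?_
  by_cases h : S a
  · simp only [if_pos h]
    exact add_comm _ _
  · simp only [if_neg h]

open Classical in
/-- A matching that misses both endpoints of an edge is not maximum: the edge can be added. -/
lemma exists_larger_matching {A J : Type*} [Fintype A] {E : A → J → Prop} {M : A → Option J}
    {x : A} {p : J} (hM : IsMatchingOn E M) (hE : E x p) (hx : M x = none)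
    (hp : ∀ a, M a ≠ some p) : ∃ M', IsMatchingOn E M' ∧ msize M < msize M' := by
  refine ⟨Function.update M x (some p), ⟨?_, ?_⟩, ?_⟩
  · intro a q h
    by_cases ha : a = x
    · subst ha
      simp only [Function.update_self, Option.some.injEq] at h
      exact h ▸ hE
    · rw [Function.update_of_ne ha] at h
      exact hM.1 a q h
  · intro a b q h h'
    have key := hM.2 a b q
    have hpa := hp a
    have hpb := hp b
    simp only [Function.update_apply] at h h'
    split_ifs at h h' <;> simp_all
  · refine Finset.card_lt_card ⟨?_, ?_⟩
    · intro a ha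
      simp only [Finset.mem_filter, Finset.mem_univ, true_and] at ha ⊢
      by_cases h : a = x
      · simp [h]
      · rwa [Function.update_of_ne h]
    · intro h
      have := @h x (by simp)
      simp [hx] at this

open Classical in
/-- In a bipartite graph, every job adjacent to a non-critical applicant is critical. -/
lemma criticalJob_of_edge {A J : Type*} [Fintype A] {E : A → J → Prop} {x : A} {p : J}
    (hE : E x p) (hx : ¬ CriticalApp E x) : CriticalJob E p := by
  by_contra hp
  simp only [CriticalApp, CriticalJob, not_forall, not_exists, Option.not_isSome_iff_eq_none]
    at hx hp
  obtain ⟨M, hM, hMx⟩ := hx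
  obtain ⟨N, hN, hNp⟩ := hp
  set S := AltReach M N x
  -- A job held under `N` inside `S` is held under `M` only inside `S`, and conversely.
  have hfwd : ∀ a b q, S a → N a = some q → M b = some q → S b := fun a b q ha h h' =>
    Relation.ReflTransGen.tail ha ⟨q, h, h'⟩
  have hbwd : ∀ a b q, S a → M a = some q → N b = some q → S b := by
    intro a b q ha h h'
    obtain ⟨c, hc, hc'⟩ := AltReach.pred hMx ha h
    exact hN.1.2 c b q hc' h' ▸ hc
  have hM' : IsMatchingOn E (fun a => if S a then N a else M a) := by
    constructor
    · intro a q h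
      dsimp only at h
      split_ifs at h
      exacts [hN.1.1 a q h, hM.1.1 a q h]
    · intro a b q h h'
      dsimp only at h h'
      split_ifs at h h' with ha hb hb
      exacts [hN.1.2 a b q h h', absurd (hfwd a b q ha h h') hb,
        absurd (hfwd b a q hb h' h) ha, hM.1.2 a b q h h']
  have hN' : IsMatchingOn E (fun a => if S a then M a else N a) := by
    constructor
    · intro a q h
      dsimp only at h
      split_ifs at h
      exacts [hM.1.1 a q h, hN.1.1 a q h]
    · intro a b q h h'
      dsimp only at h h'
      split_ifs at h h' with ha hb hb
      exacts [hM.1.2 a b q h h', absurd (hbwd a b q ha h h') hb,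
        absurd (hbwd b a q hb h' h) ha, hN.1.2 a b q h h']
  have hSx : S x := Relation.ReflTransGen.refl
  obtain ⟨N'', hN'', hlt⟩ := exists_larger_matching hN' hE (by simp [hSx, hMx]) (by
    intro a h
    split_ifs at h with ha
    · obtain ⟨c, -, hc⟩ := AltReach.pred hMx ha h
      exact hNp c hc
    · exact hNp a h)
  have h1 := hM.2 _ hM'
  have h2 := hN.2 _ hN''
  have h3 := msize_exchange M N S
  omega

/-- With ties, `f x` and `s x` are disjoint for every applicant. -/
theorem fSet_disjoint_sSet
    {A J : Type*} [Fintype A] [Fintype J] [DecidableEq J]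
    (k : ℕ) (r : A → J → ℕ∞) (cat : A → ℕ) (wt : ℕ → ℚ)
    (f : A → Finset J) (s : A → Finset J) (l : A → J)
    (hcat : ∀ x, 1 ≤ cat x ∧ cat x ≤ k)
    (hw : ∀ i j, 1 ≤ i → i < j → j ≤ k → wt j < wt i)
    (hwpos : ∀ i, 1 ≤ i → i ≤ k → 0 < wt i)
    (hlast : ∀ x, r x (l x) < ⊤ ∧ (∀ p, r x p < ⊤ → p ≠ l x → r x p < r x (l x)) ∧
      ∀ y, r y (l x) < ⊤ → y = x)
    (hfirst : ∀ x p, p ∈ f x ↔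
      r x p < ⊤ ∧ (∀ j < cat x, ¬ CriticalJob (Gedge cat f j) p) ∧
      ∀ q, r x q < ⊤ → (∀ j < cat x, ¬ CriticalJob (Gedge cat f j) q) → r x p ≤ r x q)
    (hsecond : ∀ x,
      (CriticalApp (Gedge cat f (cat x)) x → s x = ∅) ∧
      (¬ CriticalApp (Gedge cat f (cat x)) x → ∀ p, p ∈ s x ↔
        r x p < ⊤ ∧ (∀ j ≤ cat x, ¬ CriticalJob (Gedge cat f j) p) ∧
        ∀ q, r x q < ⊤ → (∀ j ≤ cat x, ¬ CriticalJob (Gedge cat f j) q) → r x p ≤ r x q))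
    (x : A) :
    f x ∩ s x = ∅ := by
  ext p
  simp only [Finset.mem_inter, Finset.notMem_empty, iff_false, not_and]
  intro hf hs
  by_cases hx : CriticalApp (Gedge cat f (cat x)) x
  · simp [(hsecond x).1 hx] at hs
  · exact (((hsecond x).2 hx p).1 hs).2.1 (cat x) le_rfl
      (criticalJob_of_edge (E := Gedge cat f (cat x)) ⟨le_rfl, hf⟩ hx)
end

section
/- With preference lists that may contain ties, if an applicant x ∈ C_i is non-critical in G_i, then every job in f(x) is critical in G_i. -/
/-- A maximum matching cannot miss both ends of an edge. -/
lemma IsMaxMatchingOn.exists_eq_some_of_edge {A J : Type*} [Fintype A] {E : A → J → Prop}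
    {M : A → Option J} (hM : IsMaxMatchingOn E M) {x : A} {p : J} (hE : E x p)
    (hx : M x = none) : ∃ y, M y = some p := by
  classical
  by_contra! hp
  have hN : IsMatchingOn E (Function.update M x (some p)) := by
    refine ⟨fun y q hy => ?_, fun y z q hy hz => ?_⟩
    · by_cases h : y = x
      · subst h
        simp only [Function.update_self, Option.some.injEq] at hy
        exact hy ▸ hE
      · rw [Function.update_of_ne h] at hy
        exact hM.1.1 y q hy
    · by_cases h : y = x <;> by_cases h' : z = x
      · rw [h, h']
      · subst h
        rw [Function.update_of_ne h'] at hz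
        simp only [Function.update_self, Option.some.injEq] at hy
        exact absurd (hy ▸ hz) (hp z)
      · subst h'
        rw [Function.update_of_ne h] at hy
        simp only [Function.update_self, Option.some.injEq] at hz
        exact absurd (hz ▸ hy) (hp y)
      · rw [Function.update_of_ne h] at hy
        rw [Function.update_of_ne h'] at hz
        exact hM.1.2 y z q hy hz
  refine absurd (hM.2 _ hN) (not_le.mpr (Finset.card_lt_card ?_))
  rw [Finset.ssubset_iff_of_subset]
  · exact ⟨x, by simp, by simp [hx]⟩
  · intro y hy
    by_cases h : y = x
    · simp [h]
    · simpa [Function.update_of_ne h] using hy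

/-- Using each of two partial assignments on complementary sets of applicants, in the two possible
ways, preserves the total size. -/
lemma msize_piecewise_add_msize_piecewise {A J : Type*} [Fintype A] (M₁ M₂ : A → Option J)
    (S : A → Prop) [DecidablePred S] :
    msize (fun y => if S y then M₂ y else M₁ y) + msize (fun y => if S y then M₁ y else M₂ y)
      = msize M₁ + msize M₂ := by
  simp only [msize, Finset.card_filter, ← Finset.sum_add_distrib]
  refine Finset.sum_congr rfl fun y _ => ?_
  by_cases h : S y
  · simp only [h, if_true]; omega
  · simp only [h, if_false]

/-- Two matchings can be glued along a set `S` of applicants if no job is used by the first on `S`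
and by the second off `S`. -/
lemma IsMatchingOn.piecewise {A J : Type*} {E : A → J → Prop} {M N : A → Option J}
    (hM : IsMatchingOn E M) (hN : IsMatchingOn E N) (S : A → Prop) [DecidablePred S]
    (h : ∀ y z q, S y → M y = some q → N z = some q → S z) :
    IsMatchingOn E (fun y => if S y then M y else N y) := by
  refine ⟨fun y q hy => ?_, fun y z q hy hz => ?_⟩
  · by_cases hs : S y
    · exact hM.1 y q (by simpa [hs] using hy)
    · exact hN.1 y q (by simpa [hs] using hy)
  · by_cases hs : S y <;> by_cases ht : S z <;> simp only [hs, ht, if_true, if_false] at hy hz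
    · exact hM.2 y z q hy hz
    · exact absurd (h y z q hs hy hz) ht
    · exact absurd (h z y q ht hz hy) hs
    · exact hN.2 y z q hy hz

/-- In any bipartite graph, every edge has a critical end. -/
lemma criticalApp_or_criticalJob {A J : Type*} [Fintype A] {E : A → J → Prop} {x : A} {p : J}
    (hE : E x p) : CriticalApp E x ∨ CriticalJob E p := by
  classical
  by_contra! hcon
  obtain ⟨hx, hp⟩ := hcon
  simp only [CriticalApp, CriticalJob, not_forall, not_exists] at hx hp
  obtain ⟨M₁, h₁, hx⟩ := hx
  obtain ⟨M₂, h₂, hp⟩ := hp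
  replace hx : M₁ x = none := by simpa using hx
  -- `S` consists of the applicants on the alternating path from `x` that begins with an `M₂`-edge.
  let S : A → Prop := Relation.ReflTransGen (fun y z => ∃ q, M₂ y = some q ∧ M₁ z = some q) x
  have hnext : ∀ y z q, S y → M₂ y = some q → M₁ z = some q → S z :=
    fun y z q hy h h' => Relation.ReflTransGen.tail hy ⟨q, h, h'⟩
  -- Since `M₁` misses `x`, a job that `M₁` assigns within `S` was reached along an `M₂`-edge.
  have hprev : ∀ y q, S y → M₁ y = some q → ∃ z, S z ∧ M₂ z = some q := by
    intro y q hy h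
    rcases Relation.ReflTransGen.cases_tail hy with rfl | ⟨z, hz, q', hz', hy'⟩
    · simp [hx] at h
    · rw [h, Option.some.injEq] at hy'
      exact ⟨z, hz, hy' ▸ hz'⟩
  have hN₁ := h₁.1.piecewise h₂.1 S fun y z q hy h h' => by
    obtain ⟨w, hw, hw'⟩ := hprev y q hy h
    exact h₂.1.2 w z q hw' h' ▸ hw
  have hN₂ := h₂.1.piecewise h₁.1 S hnext
  have hmax : IsMaxMatchingOn E (fun y => if S y then M₁ y else M₂ y) := by
    refine ⟨hN₁, fun M' hM' => ?_⟩
    have hsum := msize_piecewise_add_msize_piecewise M₁ M₂ S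
    have hle := h₁.2 _ hN₂
    have hle' := h₂.2 _ hM'
    omega
  have hSx : S x := Relation.ReflTransGen.refl
  obtain ⟨y, hy⟩ := hmax.exists_eq_some_of_edge hE (by simp [hSx, hx])
  by_cases hs : S y
  · obtain ⟨z, -, hz⟩ := hprev y p hs (by simpa [hs] using hy)
    exact hp z hz
  · exact hp y (by simpa [hs] using hy)

/-- With ties, if applicant `x ∈ C_i` is non-critical in `G_i`,
then every job in `f x` is critical in `G_i`. -/
theorem fSet_critical_of_noncritical_applicant
    {A J : Type*} [Fintype A] [Fintype J] [DecidableEq J]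
    (k : ℕ) (r : A → J → ℕ∞) (cat : A → ℕ) (wt : ℕ → ℚ)
    (f : A → Finset J) (l : A → J)
    (hcat : ∀ x, 1 ≤ cat x ∧ cat x ≤ k)
    (hw : ∀ i j, 1 ≤ i → i < j → j ≤ k → wt j < wt i)
    (hwpos : ∀ i, 1 ≤ i → i ≤ k → 0 < wt i)
    (hlast : ∀ x, r x (l x) < ⊤ ∧ (∀ p, r x p < ⊤ → p ≠ l x → r x p < r x (l x)) ∧
      ∀ y, r y (l x) < ⊤ → y = x)
    (hfirst : ∀ x p, p ∈ f x ↔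
      r x p < ⊤ ∧ (∀ j < cat x, ¬ CriticalJob (Gedge cat f j) p) ∧
      ∀ q, r x q < ⊤ → (∀ j < cat x, ¬ CriticalJob (Gedge cat f j) q) → r x p ≤ r x q)
    (x : A) (hx : ¬ CriticalApp (Gedge cat f (cat x)) x) :
    ∀ p ∈ f x, CriticalJob (Gedge cat f (cat x)) p := by
  intro p hp
  exact (criticalApp_or_criticalJob ⟨le_rfl, hp⟩).resolve_left hx
end

section
/- Let G be a bipartite graph and let v be a non-critical vertex of G. Then for every maximum matching M of G there exists an alternating path with respect to M of even length starting at v and ending at a vertex that is free in M. -/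
/-- Adjacency in the bipartite graph, viewed on the vertex set `A ⊕ J`. -/
def adjV {A J : Type*} (E : A → J → Prop) : A ⊕ J → A ⊕ J → Prop
  | .inl a, .inr p => E a p
  | .inr p, .inl a => E a p
  | _, _ => False

/-- The edge between two vertices of `A ⊕ J` is an edge of the matching `M`. -/
def matchedEdge {A J : Type*} (M : A → Option J) : A ⊕ J → A ⊕ J → Prop
  | .inl a, .inr p => M a = some p
  | .inr p, .inl a => M a = some p
  | _, _ => False

/-- A vertex of `A ⊕ J` is free (unmatched) in `M`. -/
def freeV {A J : Type*} (M : A → Option J) : A ⊕ J → Prop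
  | .inl a => M a = none
  | .inr p => ∀ a, M a ≠ some p

section Helpers

variable {A J : Type*} {E : A → J → Prop} {M O : A → Option J}

lemma matchedEdge_symm {x y : A ⊕ J} (h : matchedEdge M x y) : matchedEdge M y x := by
  cases x <;> cases y <;> exact h

lemma matchedEdge_unique (hM : IsMatchingOn E M) {x y z : A ⊕ J}
    (h : matchedEdge M x y) (h' : matchedEdge M x z) : y = z := by
  rcases x with x | x <;> rcases y with y | y <;> rcases z with z | z <;>
    simp only [matchedEdge] at h h'
  · rw [h] at h'; rw [Option.some.inj h']
  · rw [hM.2 _ _ _ h h']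

lemma adjV_of_matchedEdge (hM : IsMatchingOn E M) {x y : A ⊕ J}
    (h : matchedEdge M x y) : adjV E x y := by
  cases x <;> cases y <;> simp only [matchedEdge, adjV] at h ⊢ <;> exact hM.1 _ _ h

lemma isLeft_of_matchedEdge {x y : A ⊕ J} (h : matchedEdge M x y) :
    y.isLeft = !x.isLeft := by
  cases x <;> cases y <;> simp [matchedEdge] at h ⊢

lemma exists_matchedEdge {x : A ⊕ J} (h : ¬ freeV M x) : ∃ z, matchedEdge M x z := by
  rcases x with x | x
  · obtain ⟨p, hp⟩ := Option.ne_none_iff_exists'.1 h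
    exact ⟨.inr p, hp⟩
  · simp only [freeV, not_forall, not_not] at h
    obtain ⟨a, ha⟩ := h
    exact ⟨.inl a, ha⟩

lemma not_matchedEdge_of_free {x z : A ⊕ J} (h : freeV M x) : ¬ matchedEdge M z x := by
  cases x <;> cases z <;> simp_all [matchedEdge, freeV]

/-- `y` is obtained from `x` by following an edge of `M` and then an edge of `O`. -/
def dstep (M O : A → Option J) (x y : A ⊕ J) : Prop :=
  ∃ z, matchedEdge M x z ∧ matchedEdge O z y

lemma dstep_injective (hM : IsMatchingOn E M) (hO : IsMatchingOn E O) {x x' y : A ⊕ J}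
    (h : dstep M O x y) (h' : dstep M O x' y) : x = x' := by
  obtain ⟨z, h1, h2⟩ := h
  obtain ⟨z', h1', h2'⟩ := h'
  obtain rfl := matchedEdge_unique hO (matchedEdge_symm h2) (matchedEdge_symm h2')
  exact matchedEdge_unique hM (matchedEdge_symm h1) (matchedEdge_symm h1')

lemma isLeft_of_dstep {x y : A ⊕ J} (h : dstep M O x y) : y.isLeft = x.isLeft := by
  obtain ⟨z, h1, h2⟩ := h
  rw [isLeft_of_matchedEdge h2, isLeft_of_matchedEdge h1, Bool.not_not]

lemma isLeft_of_reachable {x y : A ⊕ J} (h : Relation.ReflTransGen (dstep M O) x y) :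
    y.isLeft = x.isLeft := by
  induction h with
  | refl => rfl
  | tail _ h ih => rw [isLeft_of_dstep h, ih]

lemma exists_chain {X : Type*} {r : X → X → Prop} {v w : X} (h : Relation.ReflTransGen r v w) :
    ∃ (n : ℕ) (D : ℕ → X), D 0 = v ∧ D n = w ∧ ∀ i < n, r (D i) (D (i + 1)) := by
  induction h with
  | refl => exact ⟨0, fun _ => v, rfl, rfl, by simp⟩
  | @tail b c _ hbc ih =>
    obtain ⟨n, D, h0, hn, hD⟩ := ih
    refine ⟨n + 1, fun i => if i ≤ n then D i else c, by simpa using h0, by simp, ?_⟩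
    intro i hi
    rcases Nat.lt_succ_iff_lt_or_eq.1 hi with h | rfl
    · simpa [h.le, Nat.succ_le_of_lt h] using hD i h
    · simpa [hn] using hbc

/-- A chain of an injective relation that starts at a vertex without predecessor never revisits a
vertex: two equal entries could be traced back to the start. -/
lemma chain_injective {X : Type*} {r : X → X → Prop} (hr : ∀ x x' y, r x y → r x' y → x = x')
    {D : ℕ → X} (h0 : ∀ x, ¬ r x (D 0)) {n : ℕ} (hD : ∀ i < n, r (D i) (D (i + 1))) :
    ∀ i j, i ≤ n → j ≤ n → D i = D j → i = j := by
  intro i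
  induction i with
  | zero =>
    rintro (_ | j) _ hj h
    · rfl
    · exact (h0 _ (h ▸ hD j hj)).elim
  | succ i ih =>
    rintro (_ | j) hi hj h
    · exact (h0 _ (h ▸ hD i hi)).elim
    · have := hD i hi
      rw [h] at this
      rw [ih j (by omega) (by omega) (hr _ _ _ this (hD j hj))]

/-- If `T` is a set of `M`-matched applicants closed under passing from `x` to the `O`-partner of the
`M`-partner of `x`, and `T` has an applicant free in `O`, then replacing `O` by `M` on `T` gives a
larger matching, so `O` is not maximum. -/
lemma exchange_contradiction [Fintype A] (hM : IsMatchingOn E M) (hO : IsMaxMatchingOn E O)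
    (T : Set A) (hT : ∀ x ∈ T, (M x).isSome)
    (hcl : ∀ x ∈ T, ∀ y p, M x = some p → O y = some p → y ∈ T)
    {a : A} (haT : a ∈ T) (ha : O a = none) : False := by
  classical
  have hN : IsMatchingOn E (fun x => if x ∈ T then M x else O x) := by
    refine ⟨fun x p h => ?_, fun x y p hx hy => ?_⟩
    · by_cases hx : x ∈ T
      · exact hM.1 x p (by simpa [hx] using h)
      · exact hO.1.1 x p (by simpa [hx] using h)
    · by_cases hxT : x ∈ T <;> by_cases hyT : y ∈ T <;>
        simp only [hxT, hyT, if_true, if_false] at hx hy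
      · exact hM.2 _ _ _ hx hy
      · exact (hyT (hcl x hxT y p hx hy)).elim
      · exact (hxT (hcl y hyT x p hy hx)).elim
      · exact hO.1.2 _ _ _ hx hy
  refine (hO.2 _ hN).not_gt (Finset.card_lt_card ?_)
  rw [Finset.ssubset_iff_of_subset]
  · exact ⟨a, by simp [haT, hT a haT], by simp [ha]⟩
  · intro x hx
    by_cases hxT : x ∈ T
    · simp [hxT, hT x hxT]
    · simpa [hxT] using hx

/-- Some vertex reachable from the `O`-free vertex `v` by double steps is free in `M`. -/
lemma exists_reachable_free [Fintype A] [Fintype J] {v : A ⊕ J} (hM : IsMatchingOn E M)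
    (hO : IsMaxMatchingOn E O) (hv : freeV O v) :
    ∃ w, Relation.ReflTransGen (dstep M O) v w ∧ freeV M w := by
  by_contra! hcon
  rcases v with a | p₀
  · refine exchange_contradiction hM hO
      {x | Relation.ReflTransGen (dstep M O) (.inl a) (.inl x)} ?_ ?_
      (a := a) Relation.ReflTransGen.refl hv
    · intro x hx
      exact Option.ne_none_iff_isSome.1 (hcon _ hx)
    · intro x hx y p h1 h2
      exact Relation.ReflTransGen.tail hx ⟨.inr p, h1, h2⟩
  · obtain ⟨a, p, hap, hp, ha⟩ : ∃ a p, M a = some p ∧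
        Relation.ReflTransGen (dstep M O) (.inr p₀) (.inr p) ∧ O a = none := by
      by_contra! hne
      have hstep : ∀ w : {w // Relation.ReflTransGen (dstep M O) (.inr p₀) w},
          ∃ w' : {w // Relation.ReflTransGen (dstep M O) (.inr p₀) w}, dstep M O w w' := by
        rintro ⟨w, hw⟩
        obtain ⟨z, hz⟩ := exists_matchedEdge (hcon w hw)
        rcases w with w | p
        · simpa using isLeft_of_reachable hw
        rcases z with x | z
        · obtain ⟨q, hq⟩ := Option.ne_none_iff_exists'.1 (hne x p hz hw)
          have hs : dstep M O (.inr p) (.inr q) := ⟨.inl x, hz, hq⟩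
          exact ⟨⟨.inr q, hw.tail hs⟩, hs⟩
        · exact hz.elim
      choose f hf using hstep
      have hinj : Function.Injective f := fun x y h =>
        Subtype.ext (dstep_injective hM hO.1 (hf x) (h ▸ hf y))
      obtain ⟨w, hw⟩ := Finite.injective_iff_surjective.1 hinj ⟨.inr p₀, .refl⟩
      obtain ⟨z, -, hz⟩ := hf w
      rw [hw] at hz
      exact not_matchedEdge_of_free hv hz
    refine exchange_contradiction hM hO
      {x | ∃ p, M x = some p ∧ Relation.ReflTransGen (dstep M O) (.inr p₀) (.inr p)} ?_ ?_
      (a := a) ⟨p, hap, hp⟩ ha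
    · rintro x ⟨p, hx, -⟩
      simp [hx]
    · rintro x ⟨p, hx, hp⟩ y p' h1 h2
      obtain rfl : p = p' := Option.some.inj (hx.symm.trans h1)
      rcases Relation.ReflTransGen.cases_tail hp with h | ⟨q, hq, z, hz, hz'⟩
      · obtain rfl := Sum.inr.inj h
        exact (hv y h2).elim
      · -- `y` is the applicant through which the last double step reached `p`
        obtain rfl : z = .inl y :=
          matchedEdge_unique hO.1 (matchedEdge_symm hz') (y := z) (z := .inl y) h2
        rcases q with q | q
        · exact hz.elim
        · exact ⟨q, hz, hq⟩

end Helpers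

/-- In a bipartite graph, if `v` is a non-critical vertex (some
maximum matching leaves `v` free), then with respect to every maximum matching `M`
there is an alternating path of even length, starting at `v`, whose edges alternate
matched/unmatched beginning with a matched edge, ending at a vertex free in `M`. -/
theorem noncritical_alternating_path_to_free
    {A J : Type*} [Fintype A] [Fintype J]
    (E : A → J → Prop) (v : A ⊕ J)
    (hv : ∃ O, IsMaxMatchingOn E O ∧ freeV O v)
    (M : A → Option J) (hM : IsMaxMatchingOn E M) :
    ∃ (n : ℕ) (c : ℕ → A ⊕ J),
      c 0 = v ∧
      (∀ i j, i ≤ 2 * n → j ≤ 2 * n → c i = c j → i = j) ∧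
      (∀ i < 2 * n, adjV E (c i) (c (i + 1))) ∧
      (∀ i < 2 * n, (matchedEdge M (c i) (c (i + 1)) ↔ Even i)) ∧
      freeV M (c (2 * n)) := by
  obtain ⟨O, hO, hvO⟩ := hv
  obtain ⟨w, hw, hfree⟩ := exists_reachable_free hM.1 hO hvO
  obtain ⟨n, D, h0, hn, hD⟩ := exists_chain hw
  have hinj := chain_injective (r := dstep M O) (D := D) (fun _ _ _ => dstep_injective hM.1 hO.1)
    (by rintro x ⟨z, -, hz⟩; exact not_matchedEdge_of_free (h0 ▸ hvO) hz) hD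
  have hDside : ∀ i ≤ n, (D i).isLeft = v.isLeft := by
    intro i
    induction i with
    | zero => intro _; rw [h0]
    | succ i ih => intro hi; rw [isLeft_of_dstep (hD i hi), ih (by omega)]
  -- `F i` is the vertex between `D i` and `D (i + 1)`; its value for `i ≥ n` is irrelevant
  have hF : ∀ i, ∃ z, i < n → matchedEdge M (D i) z ∧ matchedEdge O z (D (i + 1)) := by
    intro i
    by_cases hi : i < n
    · obtain ⟨z, hz⟩ := hD i hi
      exact ⟨z, fun _ => hz⟩
    · exact ⟨v, fun h => (hi h).elim⟩
  choose F hF using hF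
  have hDF : ∀ i j, i ≤ n → j < n → D i ≠ F j := by
    intro i j hi hj h
    have h1 := isLeft_of_matchedEdge (hF j hj).1
    rw [← h, hDside i hi, hDside j hj.le] at h1
    cases hvl : v.isLeft <;> simp [hvl] at h1
  let c : ℕ → A ⊕ J := fun i => if Even i then D (i / 2) else F (i / 2)
  have hce : ∀ k, c (2 * k) = D k := fun k => by simp [c]
  have hco : ∀ k, c (2 * k + 1) = F k := fun k => by
    have : (2 * k + 1) / 2 = k := by omega
    simp [c, this]
  refine ⟨n, c, by rw [← h0]; exact hce 0, ?_, ?_, ?_, ?_⟩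
  · intro i j hi hj h
    obtain ⟨k, rfl | rfl⟩ := Nat.even_or_odd' i <;> obtain ⟨l, rfl | rfl⟩ := Nat.even_or_odd' j <;>
      simp only [hce, hco] at h
    · rw [hinj k l (by omega) (by omega) h]
    · exact (hDF k l (by omega) (by omega) h).elim
    · exact (hDF l k (by omega) (by omega) h.symm).elim
    · have h1 := matchedEdge_symm (hF k (by omega)).1
      rw [h] at h1
      have h2 := matchedEdge_symm (hF l (by omega)).1
      rw [hinj k l (by omega) (by omega) (matchedEdge_unique hM.1 h1 h2)]
  · intro i hi
    obtain ⟨k, rfl | rfl⟩ := Nat.even_or_odd' i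
    · rw [hce, hco]
      exact adjV_of_matchedEdge hM.1 (hF k (by omega)).1
    · rw [show 2 * k + 1 + 1 = 2 * (k + 1) by ring, hce, hco]
      exact adjV_of_matchedEdge hO.1 (hF k (by omega)).2
  · intro i hi
    obtain ⟨k, rfl | rfl⟩ := Nat.even_or_odd' i
    · rw [hce, hco]
      exact iff_of_true (hF k (by omega)).1 (by simp)
    · rw [show 2 * k + 1 + 1 = 2 * (k + 1) by ring, hce, hco]
      -- the `M`-partner of `F k` is `D k`, which differs from `D (k + 1)`
      refine iff_of_false (fun h => ?_) (by simp)
      have h1 := matchedEdge_unique hM.1 h (matchedEdge_symm (hF k (by omega)).1)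
      have := hinj _ _ (by omega) (by omega) h1
      omega
  · rw [hce, hn]
    exact hfree
end

section
/- With preference lists that may contain ties, let M be a popular matching. Then for all i with 1 ≤ i ≤ k, the matching M_i = M ∩ E[G_i] is a maximum matching of G_i. -/
/-- The restriction `M ∩ E[G_i]` of a matching `M` to the edges of `G_i`. -/
def restrictM {A J : Type*} [DecidableEq J] (cat : A → ℕ) (f : A → Finset J)
    (i : ℕ) (M : A → Option J) : A → Option J :=
  fun x => (M x).bind fun p => if cat x ≤ i ∧ p ∈ f x then some p else none

/-! ### Trading paths -/

/-- `x` can trade with `y`: some job that is an `E`-neighbour of `x` is held by `y` in `M`. -/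
def Trade {A J : Type*} (E : A → J → Prop) (M : A → Option J) (x y : A) : Prop :=
  ∃ p, E x p ∧ M y = some p

/-- `Trail R b a S`: there is a repetition-free `R`-path from `a` to `b` whose set of vertices,
both ends included, is `S`. -/
inductive Trail {A : Type*} (R : A → A → Prop) (b : A) : A → Set A → Prop
  | nil : Trail R b b {b}
  | cons {x a : A} {S : Set A} : R x a → Trail R b a S → x ∉ S → Trail R b x (insert x S)

namespace Trail

variable {A J : Type*} {R : A → A → Prop} {a b : A} {S : Set A}

lemma start_mem (h : Trail R b a S) : a ∈ S := by
  cases h <;> simp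

lemma end_mem (h : Trail R b a S) : b ∈ S := by
  induction h with
  | nil => simp
  | cons _ _ _ ih => exact Set.mem_insert_of_mem _ ih

lemma reach_of_mem (h : Trail R b a S) : ∀ z ∈ S, Relation.ReflTransGen R a z := by
  induction h with
  | nil => rintro z rfl; exact .refl
  | cons hR _ _ ih =>
    rintro z (rfl | hz)
    · exact .refl
    · exact .head hR (ih z hz)

/-- The part of a path from one of its vertices `z` on; every vertex left out precedes `z`. -/
lemma suffix (h : Trail R b a S) : ∀ z ∈ S, ∃ T, Trail R b z T ∧
    ∀ y ∈ S, y ∉ T → Relation.TransGen R y z := by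
  induction h with
  | nil =>
    rintro z rfl
    exact ⟨_, .nil, fun y hy hn => absurd hy hn⟩
  | @cons x a S hR h hx ih =>
    rintro z (rfl | hz)
    · exact ⟨_, .cons hR h hx, fun y hy hn => absurd hy hn⟩
    · obtain ⟨T, hT, hT'⟩ := ih z hz
      refine ⟨T, hT, ?_⟩
      rintro y (rfl | hy) hn
      · exact Relation.TransGen.head' hR (h.reach_of_mem z hz)
      · exact hT' y hy hn

lemma exists_of_reach (h : Relation.ReflTransGen R a b) : ∃ S, Trail R b a S := by
  induction h using Relation.ReflTransGen.head_induction_on with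
  | refl => exact ⟨_, .nil⟩
  | @head a c hR _ ih =>
    obtain ⟨S, hS⟩ := ih
    by_cases ha : a ∈ S
    · obtain ⟨T, hT, _⟩ := hS.suffix a ha
      exact ⟨T, hT⟩
    · exact ⟨_, .cons hR hS ha⟩

/-- If `y` lies on no closed walk, a walk through `y` can be made repetition-free without
losing `y`. -/
lemma exists_of_reach_through {y : A} (hy : ¬ Relation.TransGen R y y)
    (h : Relation.ReflTransGen R a y) (h' : Relation.ReflTransGen R y b) :
    ∃ S, Trail R b a S ∧ y ∈ S := by
  induction h using Relation.ReflTransGen.head_induction_on with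
  | refl =>
    obtain ⟨S, hS⟩ := exists_of_reach h'
    exact ⟨S, hS, hS.start_mem⟩
  | @head a c hR hcy ih =>
    obtain ⟨S, hS, hyS⟩ := ih
    by_cases ha : a ∈ S
    · obtain ⟨T, hT, hT'⟩ := hS.suffix a ha
      refine ⟨T, hT, ?_⟩
      by_contra hyT
      exact hy ((hT' y hyS hyT).trans_left (.head hR hcy))
    · exact ⟨_, .cons hR hS ha, Set.mem_insert_of_mem _ hyS⟩

open Classical in
/-- Moving each applicant of a trading path from `a` to `b` to the job of its successor, and
leaving `b` unassigned, yields a matching that no longer uses the job of `a`. -/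
lemma exists_shift {E : A → J → Prop} {M : A → Option J}
    (hM : ∀ x y p, M x = some p → M y = some p → x = y)
    (h : Trail (Trade E M) b a S) :
    ∃ N : A → Option J, N b = none ∧ (∀ x ∉ S, N x = M x) ∧
      (∀ x ∈ S, x ≠ b → ∃ p, E x p ∧ N x = some p) ∧
      (∀ x y p, N x = some p → N y = some p → x = y) ∧
      (∀ z p, N z = some p → ∃ y, y ≠ a ∧ M y = some p) := by
  induction h with
  | nil =>
    refine ⟨Function.update M b none, by simp, ?_, ?_, ?_, ?_⟩
    · intro x hx
      exact Function.update_of_ne hx _ _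
    · intro x hx hne
      exact absurd hx hne
    · intro x y p hx hy
      simp only [Function.update_apply] at hx hy
      split_ifs at hx hy
      exact hM x y p hx hy
    · intro z p hz
      simp only [Function.update_apply] at hz
      split_ifs at hz with hzb
      exact ⟨z, hzb, hz⟩
  | @cons x a S hR h hx ih =>
    obtain ⟨N, hNb, hNo, hNS, hinj, hused⟩ := ih
    obtain ⟨p, hEp, hap⟩ := hR
    have hxb : x ≠ b := fun e => hx (e ▸ h.end_mem)
    have hxa : a ≠ x := fun e => hx (e ▸ h.start_mem)
    have hfree : ∀ z, N z ≠ some p := by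
      intro z hz
      obtain ⟨y, hya, hy⟩ := hused z p hz
      exact hya (hM _ _ _ hy hap)
    refine ⟨Function.update N x (some p), ?_, ?_, ?_, ?_, ?_⟩
    · rw [Function.update_of_ne hxb.symm, hNb]
    · intro z hz
      rw [Set.mem_insert_iff, not_or] at hz
      rw [Function.update_of_ne hz.1, hNo z hz.2]
    · intro z hz hzb
      by_cases hzx : z = x
      · subst hzx
        exact ⟨p, hEp, by simp⟩
      · rw [Function.update_of_ne hzx]
        exact hNS z (hz.resolve_left hzx) hzb
    · intro z z' q hz hz'
      simp only [Function.update_apply] at hz hz'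
      split_ifs at hz hz' with h1 h2 h2
      · rw [h1, h2]
      · exact absurd (hz'.trans hz.symm) (hfree z')
      · exact absurd (hz.trans hz'.symm) (hfree z)
      · exact hinj _ _ _ hz hz'
    · intro z q hz
      simp only [Function.update_apply] at hz
      split_ifs at hz with h1
      · exact ⟨a, hxa, hap.trans hz⟩
      · obtain ⟨y, _, hy⟩ := hused z q hz
        refine ⟨y, ?_, hy⟩
        -- off the old path `N` agrees with `M`, so `x` would hold the job of `z` in `N`
        rintro rfl
        exact h1 (hinj _ _ _ hz ((hNo y hx).trans hy))

end Trail

/-! ### Consequences of popularity -/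

section Popularity

variable {A J : Type*} [Fintype A] {r : A → J → ℕ∞} {w : A → ℚ} {M : A → Option J}
  {E : A → J → Prop}

/-- If only applicants of `D` may lose and those of `T` strictly gain by moving from the popular
matching `M` to `N`, then `T` weighs at most as much as `D`. -/
lemma sum_gain_le_sum_loss (hw : ∀ x, 0 < w x) (hpop : Popular r w M) {N : A → Option J}
    (hN : IsMatching r N) (T D : Finset A) (hT : ∀ x ∈ T, mrank r N x < mrank r M x)
    (hD : ∀ x ∉ D, mrank r N x ≤ mrank r M x) : ∑ x ∈ T, w x ≤ ∑ x ∈ D, w x := by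
  classical
  have h := hpop.2 N hN
  unfold MorePopular satisfaction at h
  have h1 : ∑ x ∈ T, w x ≤ ∑ x, if mrank r N x < mrank r M x then w x else 0 := by
    rw [← Finset.sum_filter]
    apply Finset.sum_le_sum_of_subset_of_nonneg
    · intro x hx
      simpa using hT x hx
    · intro x _ _
      exact (hw x).le
  have h2 : (∑ x, if mrank r M x < mrank r N x then w x else 0) ≤ ∑ x ∈ D, w x := by
    rw [← Finset.sum_filter]
    apply Finset.sum_le_sum_of_subset_of_nonneg
    · intro x hx
      by_contra hxD
      exact absurd (hD x hxD) (not_le.2 (by simpa using hx))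
    · intro x _ _
      exact (hw x).le
  have h3 : (∑ x, if mrank r N x < mrank r M x then w x else 0) ≤
      ∑ x, if mrank r M x < mrank r N x then w x else 0 := by
    by_contra hlt
    apply h
    convert sub_pos.2 (not_le.1 hlt)
  linarith

/-- Along a trading path the unhappy applicants other than the last one weigh in total at most as
much as the last one, who loses its job. -/
lemma Trail.sum_weight_le (hw : ∀ x, 0 < w x) (hpop : Popular r w M)
    (hE : ∀ x p, E x p → r x p < ⊤ ∧ r x p ≤ mrank r M x) {a b : A} {S : Set A}
    (h : Trail (Trade E M) b a S) (T : Finset A)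
    (hT : ∀ x ∈ T, x ∈ S ∧ x ≠ b ∧ ∀ p, E x p → r x p < mrank r M x) :
    ∑ x ∈ T, w x ≤ w b := by
  obtain ⟨N, hNb, hNo, hNS, hinj, -⟩ := h.exists_shift hpop.1.2
  have hN : IsMatching r N := by
    refine ⟨fun x p hx => ?_, hinj⟩
    by_cases hxS : x ∈ S
    · by_cases hxb : x = b
      · simp [hxb, hNb] at hx
      · obtain ⟨q, hq, hxq⟩ := hNS x hxS hxb
        rw [hx, Option.some_inj] at hxq
        exact hxq ▸ (hE x q hq).1
    · exact hpop.1.1 x p (hNo x hxS ▸ hx)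
  have := sum_gain_le_sum_loss hw hpop hN T {b} ?_ ?_
  · simpa using this
  · intro x hx
    obtain ⟨hxS, hxb, hU⟩ := hT x hx
    obtain ⟨q, hq, hxq⟩ := hNS x hxS hxb
    simpa [mrank, hxq] using hU q hq
  · intro x hxb
    rw [Finset.mem_singleton] at hxb
    by_cases hxS : x ∈ S
    · obtain ⟨q, hq, hxq⟩ := hNS x hxS hxb
      simpa [mrank, hxq] using (hE x q hq).2
    · simp [mrank, hNo x hxS]

/-- A trading path containing an unhappy applicant cannot be completed by giving its last
applicant a job that is free or that of the first applicant: nobody would lose. -/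
lemma Trail.not_closable (hw : ∀ x, 0 < w x) (hpop : Popular r w M)
    (hE : ∀ x p, E x p → r x p < ⊤ ∧ r x p ≤ mrank r M x) {a b u : A} {S : Set A}
    (h : Trail (Trade E M) b a S) {p : J} (hp : E b p) (hpa : ∀ y, M y = some p → y = a)
    (hu : u ∈ S) (hU : ∀ p, E u p → r u p < mrank r M u) : False := by
  classical
  obtain ⟨N₀, -, hNo, hNS, hinj, hused⟩ := h.exists_shift hpop.1.2
  have hfree : ∀ z, N₀ z ≠ some p := by
    intro z hz
    obtain ⟨y, hya, hy⟩ := hused z p hz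
    exact hya (hpa y hy)
  obtain ⟨N, hNdef⟩ : ∃ N, N = Function.update N₀ b (some p) := ⟨_, rfl⟩
  have hNo' : ∀ x ∉ S, N x = M x := by
    intro x hx
    have hxb : x ≠ b := fun e => hx (e ▸ h.end_mem)
    rw [hNdef, Function.update_of_ne hxb, hNo x hx]
  have hNS' : ∀ x ∈ S, ∃ p, E x p ∧ N x = some p := by
    intro x hx
    by_cases hxb : x = b
    · subst hxb
      exact ⟨p, hp, by simp [hNdef]⟩
    · rw [hNdef, Function.update_of_ne hxb]
      exact hNS x hx hxb
  have hN : IsMatching r N := by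
    refine ⟨fun x q hx => ?_, fun z z' q hz hz' => ?_⟩
    · by_cases hxS : x ∈ S
      · obtain ⟨q', hq, hxq⟩ := hNS' x hxS
        rw [hx, Option.some_inj] at hxq
        exact hxq ▸ (hE x q' hq).1
      · exact hpop.1.1 x q (hNo' x hxS ▸ hx)
    · simp only [hNdef, Function.update_apply] at hz hz'
      split_ifs at hz hz' with h1 h2 h2
      · rw [h1, h2]
      · exact absurd (hz'.trans hz.symm) (hfree z')
      · exact absurd (hz.trans hz'.symm) (hfree z)
      · exact hinj _ _ _ hz hz'
  have := sum_gain_le_sum_loss hw hpop hN {u} ∅ ?_ ?_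
  · simp only [Finset.sum_singleton, Finset.sum_empty] at this
    exact absurd (hw u) (not_lt.2 this)
  · intro x hx
    obtain rfl := Finset.mem_singleton.1 hx
    obtain ⟨q, hq, hxq⟩ := hNS' x hu
    simpa [mrank, hxq] using hU q hq
  · intro x _
    by_cases hxS : x ∈ S
    · obtain ⟨q, hq, hxq⟩ := hNS' x hxS
      simpa [mrank, hxq] using (hE x q hq).2
    · simp [mrank, hNo' x hxS]

lemma not_transGen_self (hw : ∀ x, 0 < w x) (hpop : Popular r w M)
    (hE : ∀ x p, E x p → r x p < ⊤ ∧ r x p ≤ mrank r M x) {u : A}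
    (hU : ∀ p, E u p → r u p < mrank r M u) : ¬ Relation.TransGen (Trade E M) u u := by
  intro h
  obtain ⟨c, ⟨p, hp, hc⟩, hcu⟩ := Relation.TransGen.head'_iff.1 h
  obtain ⟨S, hS⟩ := Trail.exists_of_reach hcu
  exact hS.not_closable hw hpop hE hp (fun y hy => hpop.1.2 _ _ _ hy hc) hS.end_mem hU

lemma not_free_reachable (hw : ∀ x, 0 < w x) (hpop : Popular r w M)
    (hE : ∀ x p, E x p → r x p < ⊤ ∧ r x p ≤ mrank r M x) {u x : A}
    (hU : ∀ p, E u p → r u p < mrank r M u) (hux : Relation.ReflTransGen (Trade E M) u x)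
    {p : J} (hp : E x p) : ∃ y, M y = some p := by
  by_contra hfree
  obtain ⟨S, hS⟩ := Trail.exists_of_reach hux
  exact hS.not_closable hw hpop hE hp (fun y hy => absurd ⟨y, hy⟩ hfree) hS.start_mem hU

end Popularity

/-! ### Maximum matchings -/

section Maximum

variable {A J : Type*} [Fintype A] {E : A → J → Prop} {M : A → Option J}

lemma exists_isMaxMatchingOn [Finite J] (E : A → J → Prop) : ∃ N, IsMaxMatchingOn E N := by
  have : Nonempty {N // IsMatchingOn E N} := ⟨⟨fun _ => none, by simp [IsMatchingOn]⟩⟩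
  obtain ⟨N, hN⟩ := Finite.exists_max (fun N : {N // IsMatchingOn E N} => msize N.1)
  exact ⟨N.1, N.2, fun K hK => hN ⟨K, hK⟩⟩

/-- Berge criterion: a matching is maximum if no unmatched applicant reaches a free job by
trades. -/
lemma isMaxMatchingOn_of_not_augmenting (hM : IsMatchingOn E M)
    (h : ∀ u x p, M u = none → Relation.ReflTransGen (Trade E M) u x → E x p →
      ∃ y, M y = some p) : IsMaxMatchingOn E M := by
  classical
  refine ⟨hM, fun N hN => ?_⟩
  obtain ⟨Z, hZ⟩ : ∃ Z : Set A,
      Z = {z | ∃ u, M u = none ∧ Relation.ReflTransGen (Trade E M) u z} := ⟨_, rfl⟩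
  -- applicants of `Z` are sent to the `M`-holder of their `N`-job, the others to themselves
  have key : ∀ x, ∃ y, (N x).isSome → (M y).isSome ∧
      (x ∈ Z → y ∈ Z ∧ M y = N x) ∧ (x ∉ Z → y = x) := by
    intro x
    by_cases hx : x ∈ Z
    · cases hNx : N x with
      | none => exact ⟨x, by simp⟩
      | some p =>
        have hx' := hx
        rw [hZ] at hx'
        obtain ⟨u, hu, hux⟩ := hx'
        have hEp := hN.1 x p hNx
        obtain ⟨y, hy⟩ := h u x p hu hux hEp
        refine ⟨y, fun _ => ⟨by simp [hy], fun _ => ⟨?_, hy⟩, fun hn => absurd hx hn⟩⟩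
        rw [hZ]
        exact ⟨u, hu, hux.tail ⟨p, hEp, hy⟩⟩
    · refine ⟨x, fun _ => ⟨?_, fun hn => absurd hn hx, fun _ => rfl⟩⟩
      by_contra hnone
      apply hx
      rw [hZ]
      exact ⟨x, by simpa using hnone, .refl⟩
  choose g hg using key
  unfold msize
  apply Finset.card_le_card_of_injOn g
  · intro x hx
    simp only [Finset.coe_filter, Finset.mem_univ, true_and, Set.mem_ofPred_eq] at hx ⊢
    exact (hg x hx).1
  · intro x hx y hy hxy
    simp only [Finset.coe_filter, Finset.mem_univ, true_and, Set.mem_ofPred_eq] at hx hy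
    obtain ⟨-, hx1, hx2⟩ := hg x hx
    obtain ⟨-, hy1, hy2⟩ := hg y hy
    by_cases hxZ : x ∈ Z <;> by_cases hyZ : y ∈ Z
    · obtain ⟨p, hp⟩ := Option.isSome_iff_exists.1 hx
      refine hN.2 x y p hp ?_
      rw [← (hy1 hyZ).2, ← hxy, (hx1 hxZ).2, hp]
    · exact absurd ((hy2 hyZ) ▸ hxy ▸ (hx1 hxZ).1) hyZ
    · exact absurd ((hx2 hxZ) ▸ hxy ▸ (hy1 hyZ).1) hxZ
    · rw [← hx2 hxZ, hxy, hy2 hyZ]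

/-- From the holder of a non-critical job some job missed by `M` can be reached by trades:
otherwise the jobs `P` of the reachable applicants `Z` contain all neighbours of `Z`, and
replacing the edges at `P` of a maximum matching that misses the given job by those of `M` would
enlarge it. -/
lemma exists_free_of_not_criticalJob (hM : IsMatchingOn E M) {q : J}
    (hq : ¬ CriticalJob E q) {c : A} (hc : M c = some q) :
    ∃ x p, Relation.ReflTransGen (Trade E M) c x ∧ E x p ∧ ∀ y, M y ≠ some p := by
  classical
  by_contra hcon
  push Not at hcon
  unfold CriticalJob at hq
  push Not at hq
  obtain ⟨N, hN, hNq⟩ := hq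
  obtain ⟨Z, hZ⟩ : ∃ Z : Set A, Z = {z | Relation.ReflTransGen (Trade E M) c z} := ⟨_, rfl⟩
  have hcZ : c ∈ Z := by rw [hZ]; exact .refl
  have hnbr : ∀ z ∈ Z, ∀ p, E z p → ∃ y ∈ Z, M y = some p := by
    intro z hz p hp
    rw [hZ] at hz ⊢
    obtain ⟨y, hy⟩ := hcon z p hz hp
    exact ⟨y, hz.tail ⟨p, hp, hy⟩, hy⟩
  obtain ⟨N', hN'⟩ : ∃ N' : A → Option J, N' = fun x => if x ∈ Z then M x else
      if ∃ z ∈ Z, M z = N x then none else N x := ⟨_, rfl⟩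
  have hin : ∀ x ∈ Z, N' x = M x := by
    intro x hx
    simp [hN', hx]
  have hout : ∀ x ∉ Z, ∀ p, N' x = some p → N x = some p ∧ ∀ z ∈ Z, M z ≠ some p := by
    intro x hx p hp
    simp only [hN', hx, if_false] at hp
    split_ifs at hp with h1
    push Not at h1
    exact ⟨hp, fun z hz e => h1 z hz (e.trans hp.symm)⟩
  have hmatch : IsMatchingOn E N' := by
    refine ⟨fun x p hx => ?_, fun x y p hx hy => ?_⟩
    · by_cases hxZ : x ∈ Z
      · exact hM.1 x p (hin x hxZ ▸ hx)
      · exact hN.1.1 x p (hout x hxZ p hx).1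
    · by_cases hxZ : x ∈ Z <;> by_cases hyZ : y ∈ Z
      · exact hM.2 x y p (hin x hxZ ▸ hx) (hin y hyZ ▸ hy)
      · exact absurd (hin x hxZ ▸ hx) ((hout y hyZ p hy).2 x hxZ)
      · exact absurd (hin y hyZ ▸ hy) ((hout x hxZ p hx).2 y hyZ)
      · exact hN.1.2 x y p (hout x hxZ p hx).1 (hout y hyZ p hy).1
  have key : ∀ x, ∃ y, (N x).isSome → (N' y).isSome ∧ N' y = N x := by
    intro x
    cases hNx : N x with
    | none => exact ⟨x, by simp⟩
    | some p =>
      by_cases hP : ∃ z ∈ Z, M z = some p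
      · obtain ⟨z, hz, hzp⟩ := hP
        exact ⟨z, fun _ => by simp [hin z hz, hzp]⟩
      · have hxZ : x ∉ Z := fun hx => hP (hnbr x hx p (hN.1.1 x p hNx))
        exact ⟨x, fun _ => by simp [hN', hxZ, hNx, hP]⟩
  choose g hg using key
  have hcN' : N' c = some q := (hin c hcZ).trans hc
  have hcard : msize N ≤
      ((Finset.univ.filter (fun x => (N' x).isSome)).erase c).card := by
    unfold msize
    apply Finset.card_le_card_of_injOn g
    · intro x hx
      simp only [Finset.coe_filter, Finset.mem_univ, true_and, Set.mem_ofPred_eq] at hx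
      rw [Finset.mem_coe, Finset.mem_erase, Finset.mem_filter]
      refine ⟨fun e => hNq x ?_, Finset.mem_univ _, (hg x hx).1⟩
      rw [← (hg x hx).2, e, hcN']
    · intro x hx y hy hxy
      simp only [Finset.coe_filter, Finset.mem_univ, true_and, Set.mem_ofPred_eq] at hx hy
      obtain ⟨p, hp⟩ := Option.isSome_iff_exists.1 hx
      exact hN.1.2 x y p hp (by rw [← (hg y hy).2, ← hxy, (hg x hx).2, hp])
  have hmem : c ∈ Finset.univ.filter (fun x => (N' x).isSome) := by simp [hcN']
  have hlt := Finset.card_erase_lt_of_mem hmem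
  have hle := hN.2 N' hmatch
  unfold msize at hle hcard
  omega

end Maximum

/-! ### The restriction of a popular matching to a level -/

lemma restrictM_eq_some {A J : Type*} [DecidableEq J] {cat : A → ℕ} {f : A → Finset J} {i : ℕ}
    {M : A → Option J} {x : A} {p : J} :
    restrictM cat f i M x = some p ↔ M x = some p ∧ cat x ≤ i ∧ p ∈ f x := by
  unfold restrictM
  cases hx : M x with
  | none => simp
  | some q =>
    simp only [Option.bind_some, Option.some_inj]
    constructor
    · intro h
      split_ifs at h with hc
      simp only [Option.some_inj] at h
      subst h
      exact ⟨rfl, hc⟩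
    · rintro ⟨rfl, hc⟩
      rw [if_pos hc]

lemma isMatchingOn_restrictM {A J : Type*} [DecidableEq J] {cat : A → ℕ} {f : A → Finset J} {i : ℕ}
    {M : A → Option J} (hM : ∀ x y p, M x = some p → M y = some p → x = y) :
    IsMatchingOn (Gedge cat f i) (restrictM cat f i M) :=
  ⟨fun _ _ h => (restrictM_eq_some.1 h).2,
    fun x y p hx hy => hM x y p (restrictM_eq_some.1 hx).1 (restrictM_eq_some.1 hy).1⟩

lemma reach_of_reach_restrictM {A J : Type*} [DecidableEq J] {cat : A → ℕ} {f : A → Finset J}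
    {i j : ℕ} (hji : j ≤ i) {M : A → Option J} {x y : A}
    (h : Relation.ReflTransGen (Trade (Gedge cat f j) (restrictM cat f j M)) x y) :
    Relation.ReflTransGen (Trade (Gedge cat f i) M) x y := by
  refine Relation.ReflTransGen.mono ?_ _ _ h
  rintro a b ⟨p, hp, hb⟩
  exact ⟨p, ⟨hp.1.trans hji, hp.2⟩, (restrictM_eq_some.1 hb).1⟩

/-- The last resort job guarantees that `f x` is nonempty. -/
lemma exists_mem_first {A J : Type*} [Fintype A] [Fintype J]
    {r : A → J → ℕ∞} {cat : A → ℕ} {f : A → Finset J} {l : A → J}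
    (hlast : ∀ x, r x (l x) < ⊤ ∧ ∀ y, r y (l x) < ⊤ → y = x)
    (hfirst : ∀ x p, p ∈ f x ↔
      r x p < ⊤ ∧ (∀ j < cat x, ¬ CriticalJob (Gedge cat f j) p) ∧
      ∀ q, r x q < ⊤ → (∀ j < cat x, ¬ CriticalJob (Gedge cat f j) q) → r x p ≤ r x q)
    (x : A) : ∃ p, p ∈ f x := by
  have hl : ∀ j < cat x, ¬ CriticalJob (Gedge cat f j) (l x) := by
    intro j hj hcrit
    obtain ⟨N, hN⟩ := exists_isMaxMatchingOn (Gedge cat f j)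
    obtain ⟨y, hy⟩ := hcrit N hN
    obtain ⟨hyj, hyf⟩ := hN.1.1 y _ hy
    obtain rfl := (hlast x).2 y ((hfirst y _).1 hyf).1
    omega
  obtain ⟨p, hp, hmin⟩ := Set.exists_min_image
    {p | r x p < ⊤ ∧ ∀ j < cat x, ¬ CriticalJob (Gedge cat f j) p} (r x) (Set.toFinite _)
    ⟨l x, (hlast x).1, hl⟩
  exact ⟨p, (hfirst x p).2 ⟨hp.1, hp.2, fun q hq hq' => hmin q ⟨hq, hq'⟩⟩⟩

/-- With ties, if `M` is a popular matching then for every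
`1 ≤ i ≤ k` the restriction `M ∩ E[G_i]` is a maximum matching of `G_i`. -/
theorem popular_restriction_maximum
    {A J : Type*} [Fintype A] [Fintype J] [DecidableEq J]
    (k : ℕ) (r : A → J → ℕ∞) (cat : A → ℕ) (wt : ℕ → ℚ)
    (f : A → Finset J) (l : A → J)
    (hcat : ∀ x, 1 ≤ cat x ∧ cat x ≤ k)
    (hw : ∀ i j, 1 ≤ i → i < j → j ≤ k → wt j < wt i)
    (hwpos : ∀ i, 1 ≤ i → i ≤ k → 0 < wt i)
    (hlast : ∀ x, r x (l x) < ⊤ ∧ (∀ p, r x p < ⊤ → p ≠ l x → r x p < r x (l x)) ∧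
      ∀ y, r y (l x) < ⊤ → y = x)
    (hfirst : ∀ x p, p ∈ f x ↔
      r x p < ⊤ ∧ (∀ j < cat x, ¬ CriticalJob (Gedge cat f j) p) ∧
      ∀ q, r x q < ⊤ → (∀ j < cat x, ¬ CriticalJob (Gedge cat f j) q) → r x p ≤ r x q)
    (M : A → Option J) (hpop : Popular r (fun z => wt (cat z)) M) :
    ∀ i, 1 ≤ i → i ≤ k → IsMaxMatchingOn (Gedge cat f i) (restrictM cat f i M) := by
  have hwlt : ∀ x y, wt (cat x) ≤ wt (cat y) → cat y ≤ cat x := by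
    intro x y h
    by_contra hlt
    exact absurd (hw (cat x) (cat y) (hcat x).1 (not_le.1 hlt) (hcat y).2) (not_lt.2 h)
  have hwle : ∀ x y, cat y ≤ cat x → wt (cat x) ≤ wt (cat y) := by
    intro x y h
    rcases h.eq_or_lt with h | h
    · rw [h]
    · exact (hw _ _ (hcat y).1 h (hcat x).2).le
  have hwp : ∀ x, 0 < wt (cat x) := fun x => hwpos _ (hcat x).1 (hcat x).2
  suffices H : ∀ i, IsMaxMatchingOn (Gedge cat f i) (restrictM cat f i M) from fun i _ _ => H i
  intro i
  induction i using Nat.strong_induction_on with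
  | _ i ih =>
  -- a job critical at level `j` is held by an applicant of category at most `j`
  have hnc : ∀ x q, cat x ≤ i → M x = some q →
      ∀ j < cat x, ¬ CriticalJob (Gedge cat f j) q := by
    intro x q hx hq j hj hcrit
    obtain ⟨y, hy⟩ := hcrit _ (ih j (by omega))
    obtain ⟨hyq, hyj, -⟩ := restrictM_eq_some.1 hy
    obtain rfl := hpop.1.2 _ _ _ hyq hq
    omega
  have hE : ∀ x p, Gedge cat f i x p → r x p < ⊤ ∧ r x p ≤ mrank r M x := by
    rintro x p ⟨hx, hp⟩
    obtain ⟨h1, -, h3⟩ := (hfirst x p).1 hp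
    refine ⟨h1, ?_⟩
    cases hq : M x with
    | none => simp [mrank, hq]
    | some q => simpa [mrank, hq] using h3 q (hpop.1.1 x q hq) (hnc x q hx hq)
  have hunhappy : ∀ x, restrictM cat f i M x = none →
      ∀ p, Gedge cat f i x p → r x p < mrank r M x := by
    rintro x hxn p ⟨hx, hp⟩
    refine lt_of_le_of_ne (hE x p ⟨hx, hp⟩).2 fun heq => ?_
    obtain ⟨h1, h2, h3⟩ := (hfirst x p).1 hp
    cases hq : M x with
    | none => simp [mrank, hq] at heq; simp [heq] at h1
    | some q =>
      simp only [mrank, hq, Option.elim_some] at heq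
      have hqf : q ∈ f x :=
        (hfirst x q).2 ⟨heq ▸ h1, hnc x q hx hq, fun q' hq' hc => heq ▸ h3 q' hq' hc⟩
      rw [restrictM_eq_some.2 ⟨hq, hx, hqf⟩] at hxn
      simp at hxn
  apply isMaxMatchingOn_of_not_augmenting (isMatchingOn_restrictM hpop.1.2)
  intro u x p hu hux hxp
  by_contra hmiss
  have hUu := hunhappy u hu
  have hux' := reach_of_reach_restrictM le_rfl hux
  have hui : cat u ≤ i := by
    rcases hux.cases_head with rfl | ⟨c, ⟨_, hc, _⟩, _⟩
    · exact hxp.1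
    · exact hc.1
  have hcyc := fun {z} hz => not_transGen_self (E := Gedge cat f i) (u := z) hwp hpop hE hz
  have hmin : ∀ n y, cat y = n → cat y ≤ i → restrictM cat f i M y = none →
      ¬ Relation.TransGen (Trade (Gedge cat f i) M) u y := by
    intro n
    induction n using Nat.strong_induction_on with
    | _ n ihn =>
    intro y hyn hyi hyU huy
    have hUy := hunhappy y hyU
    obtain ⟨q, hq⟩ := exists_mem_first (fun x => ⟨(hlast x).1, (hlast x).2.2⟩) hfirst y
    have hy1 := (hcat y).1
    have hqnc := ((hfirst y q).1 hq).2.1 (cat y - 1) (by omega)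
    obtain ⟨b, q', hyb, hbq, hbn⟩ : ∃ b q', Relation.TransGen (Trade (Gedge cat f i) M) y b ∧
        M b = some q' ∧ ∀ z, restrictM cat f (cat y - 1) M z ≠ some q' := by
      obtain ⟨c, hc⟩ := not_free_reachable hwp hpop hE hUy .refl (⟨hyi, hq⟩ : Gedge cat f i y q)
      have hyc : Trade (Gedge cat f i) M y c := ⟨q, ⟨hyi, hq⟩, hc⟩
      by_cases hcr : restrictM cat f (cat y - 1) M c = some q
      · obtain ⟨x', p', hcx, hxp', hfree⟩ :=
          exists_free_of_not_criticalJob (isMatchingOn_restrictM hpop.1.2) hqnc hcr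
        have hcx' := reach_of_reach_restrictM (i := i) (by omega) hcx
        have hxp'' : Gedge cat f i x' p' := ⟨hxp'.1.trans (by omega), hxp'.2⟩
        obtain ⟨b, hb⟩ := not_free_reachable hwp hpop hE hUy (.head hyc hcx') hxp''
        exact ⟨b, p', (Relation.TransGen.head' hyc hcx').tail ⟨p', hxp'', hb⟩, hb, hfree⟩
      · refine ⟨c, q, .single hyc, hc, fun z hz => hcr ?_⟩
        obtain rfl := hpop.1.2 _ _ _ (restrictM_eq_some.1 hz).1 hc
        exact hz
    have hub := huy.trans hyb
    by_cases hby : cat b < cat y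
    · refine ihn (cat b) (by omega) b rfl (by omega) ?_ hub
      rw [Option.eq_none_iff_forall_ne_some]
      intro s hs
      obtain ⟨hs1, -, hs2⟩ := restrictM_eq_some.1 hs
      rw [hbq, Option.some_inj] at hs1
      subst hs1
      exact hbn b (restrictM_eq_some.2 ⟨hbq, by omega, hs2⟩)
    · classical
      obtain ⟨S, hS, hyS⟩ := Trail.exists_of_reach_through (hcyc hUy) huy.to_reflTransGen
        hyb.to_reflTransGen
      have huy' : u ≠ y := by rintro rfl; exact hcyc hUu huy
      have hub' : u ≠ b := by rintro rfl; exact hcyc hUu hub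
      have hyb' : y ≠ b := by rintro rfl; exact hcyc hUy hyb
      have hsum := hS.sum_weight_le hwp hpop hE {u, y} (by
        intro z hz
        rw [Finset.mem_insert, Finset.mem_singleton] at hz
        rcases hz with rfl | rfl
        · exact ⟨hS.start_mem, hub', hUu⟩
        · exact ⟨hyS, hyb', hUy⟩)
      rw [Finset.sum_pair huy'] at hsum
      have h1 := hwle b y (not_lt.1 hby)
      have h2 := hwp u
      linarith
  obtain ⟨y, hy⟩ := not_free_reachable hwp hpop hE hUu hux' hxp
  have huy : Relation.TransGen (Trade (Gedge cat f i) M) u y := .tail' hux' ⟨p, hxp, hy⟩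
  have huy' : u ≠ y := by rintro rfl; exact hcyc hUu huy
  obtain ⟨S, hS⟩ := Trail.exists_of_reach huy.to_reflTransGen
  have hsum := hS.sum_weight_le hwp hpop hE {u} (by
    intro z hz
    obtain rfl := Finset.mem_singleton.1 hz
    exact ⟨hS.start_mem, huy', hUu⟩)
  rw [Finset.sum_singleton] at hsum
  have hyi : cat y ≤ i := (hwlt u y hsum).trans hui
  refine hmin _ y rfl hyi ?_ huy
  rw [Option.eq_none_iff_forall_ne_some]
  intro s hs
  have hs1 := (restrictM_eq_some.1 hs).1
  rw [hy, Option.some_inj] at hs1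
  subst hs1
  exact hmiss ⟨y, hs⟩
end
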